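/- arXiv:2111.09923 — 7 statements merged into one kernel-verified Lean document; each statement's English description precedes it below -/
import Mathlib

section
/- Let n ≥ 3 be an odd integer. There exists ρ > 0 depending only on n such that: for every real-split central division ℚ-algebra A of degree n, every order 𝒪 ⊆ A, every z ∈ GL_n(ℝ), and every γ ∈ 𝒪 with nr(γ) = 1, if there exists k ∈ SO(n) such that every entry of z⁻¹(ι γ)z − k has absolute value less than ρ, then γ = 1. -/
open Matrix

/-- `IsSO k` : `k ∈ SO(n)`. -/
def IsSO {n : ℕ} (k : Matrix (Fin n) (Fin n) ℝ) : Prop :=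
  kᵀ * k = 1 ∧ k.det = 1

/-- An order in a `ℚ`-algebra: a subring which is finitely generated as a `ℤ`-module and
contains a `ℚ`-basis of the algebra. -/
def IsOrder (A : Type*) [Ring A] [Algebra ℚ A] (O : Subring A) : Prop :=
  O.toAddSubgroup.FG ∧ Submodule.span ℚ (O : Set A) = ⊤

lemma aux_rel {n : ℕ} (hn : 0 < n) {A : Type} [DivisionRing A] [CharZero A]
    (ι : A →ₐ[ℚ] Matrix (Fin n) (Fin n) ℝ)
    (hc : Subalgebra.center ℚ A = ⊥) {I : Type} (r : I → ℝ) (hr : LinearIndependent ℚ r)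
    (s : Finset I) : ∀ a : I → A, ∑ i ∈ s, r i • ι (a i) = 0 → ∀ i ∈ s, a i = 0 := by
  classical
  induction s using Finset.induction_on with
  | empty => simp
  | insert i s his ih =>
    intro a ha
    by_cases h0 : a i = 0
    · rw [Finset.sum_insert his, h0] at ha
      simp only [map_zero, smul_zero, zero_add] at ha
      intro j hj
      rcases Finset.mem_insert.1 hj with rfl | hj
      · exact h0
      · exact ih a ha j hj
    · exfalso
      have hb : ∑ j ∈ insert i s, r j • ι ((a i)⁻¹ * a j) = 0 := by
        have := congrArg (fun M => ι (a i)⁻¹ * M) ha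
        simpa [Finset.mul_sum] using this
      have hcomm : ∀ j ∈ s, ∀ c : A, c * ((a i)⁻¹ * a j) - ((a i)⁻¹ * a j) * c = 0 := by
        intro j hj c
        refine ih (fun j => c * ((a i)⁻¹ * a j) - ((a i)⁻¹ * a j) * c) ?_ j hj
        have h1 := congrArg (fun M => ι c * M - M * ι c) hb
        simp only [Finset.mul_sum, Finset.sum_mul, mul_zero, zero_mul, sub_zero,
          ← Finset.sum_sub_distrib] at h1
        rw [Finset.sum_insert his, inv_mul_cancel₀ h0] at h1
        simp only [map_one, mul_smul_comm, smul_mul_assoc, mul_one, one_mul, sub_self,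
          zero_add] at h1
        simpa only [map_sub, map_mul ι c, map_mul ι _ c, smul_sub] using h1
      have hq : ∀ j ∈ insert i s, ∃ q : ℚ, algebraMap ℚ A q = (a i)⁻¹ * a j := by
        intro j hj
        have : (a i)⁻¹ * a j ∈ Subalgebra.center ℚ A := by
          rw [Subalgebra.mem_center_iff]
          intro c
          rcases Finset.mem_insert.1 hj with rfl | hj
          · simp [inv_mul_cancel₀ h0]
          · exact sub_eq_zero.1 (hcomm j hj c)
        rw [hc] at this
        exact Algebra.mem_bot.1 this
      choose! q hq using hq
      have hsum : ∑ j ∈ insert i s, q j • r j = 0 := by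
        have h2 := congrFun (congrFun hb ⟨0, hn⟩) ⟨0, hn⟩
        rw [Matrix.sum_apply] at h2
        rw [Matrix.zero_apply] at h2
        rw [← h2]
        refine Finset.sum_congr rfl fun j hj => ?_
        rw [← hq j hj, AlgHom.commutes, Matrix.smul_apply, Matrix.algebraMap_matrix_apply]
        simp [Rat.smul_def, mul_comm]
      have h3 := (linearIndependent_iff'.1 hr) _ q hsum i (Finset.mem_insert_self _ _)
      have h4 := hq i (Finset.mem_insert_self _ _)
      rw [h3, inv_mul_cancel₀ h0, map_zero] at h4
      exact zero_ne_one h4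

lemma aux_li {n : ℕ} (hn : 0 < n) {A : Type} [DivisionRing A] [CharZero A]
    (ι : A →ₐ[ℚ] Matrix (Fin n) (Fin n) ℝ)
    (hc : Subalgebra.center ℚ A = ⊥) {K : Type} [Fintype K] (b : K → A)
    (hb : LinearIndependent ℚ b) : LinearIndependent ℝ (fun k => ι (b k)) := by
  classical
  rw [Fintype.linearIndependent_iff]
  intro t ht
  let R := Module.Basis.ofVectorSpace ℚ ℝ
  let s := Finset.univ.biUnion fun k => (R.repr (t k)).support
  have ht' : ∀ k, t k = ∑ i ∈ s, (R.repr (t k) i) • R i := by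
    intro k
    conv_lhs => rw [← R.linearCombination_repr (t k), Finsupp.linearCombination_apply]
    apply Finsupp.sum_of_support_subset
    · exact Finset.subset_biUnion_of_mem (fun k => (R.repr (t k)).support) (Finset.mem_univ k)
    · simp
  have h1 := aux_rel hn ι hc R R.linearIndependent s
    (fun i => ∑ k, (R.repr (t k) i) • b k) (by
      rw [← ht]
      simp only [map_sum, map_smul, Finset.smul_sum]
      rw [Finset.sum_comm]
      refine Finset.sum_congr rfl fun k _ => ?_
      conv_rhs => rw [ht' k, Finset.sum_smul]
      refine Finset.sum_congr rfl fun i _ => ?_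
      rw [smul_comm, smul_assoc])
  intro k
  rw [ht' k]
  refine Finset.sum_eq_zero fun i hi => ?_
  rw [Fintype.linearIndependent_iff.1 hb _ (h1 i hi) k, zero_smul]

lemma aux_det {n : ℕ} (X : Matrix (Fin n) (Fin n) ℝ) :
    LinearMap.det (LinearMap.mulLeft ℝ X) = X.det ^ n := by
  classical
  rw [← LinearMap.det_toMatrix (Matrix.stdBasis ℝ (Fin n) (Fin n))]
  have : LinearMap.toMatrix (Matrix.stdBasis ℝ (Fin n) (Fin n)) (Matrix.stdBasis ℝ (Fin n) (Fin n))
      (LinearMap.mulLeft ℝ X) = Matrix.kroneckerMap (· * ·) X (1 : Matrix (Fin n) (Fin n) ℝ) := by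
    ext ⟨i, j⟩ ⟨k, l⟩
    rw [LinearMap.toMatrix_apply, Matrix.stdBasis_eq_single]
    have : ∀ M : Matrix (Fin n) (Fin n) ℝ,
        (Matrix.stdBasis ℝ (Fin n) (Fin n)).repr M (i, j) = M i j := fun M => by
      simp [Matrix.stdBasis]
      try rfl
    rw [this]
    by_cases h : j = l
    · subst h; simp
    · simp [Matrix.mul_single_apply_of_ne, h]
  rw [this, Matrix.det_kronecker]
  simp

lemma aux_int {n : ℕ} (hn : 0 < n) {A : Type} [DivisionRing A] [CharZero A]
    (ι : A →ₐ[ℚ] Matrix (Fin n) (Fin n) ℝ)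
    (hc : Subalgebra.center ℚ A = ⊥) (hd : Module.finrank ℚ A = n ^ 2)
    (O : Subring A) (hO : IsOrder A O) (x : A) (hx : x ∈ O) :
    ∃ m : ℤ, (ι x).det ^ n = m := by
  classical
  obtain ⟨hfg, hsp⟩ := hO
  have : Module.Finite ℤ O := by
    have h : Module.Finite ℤ O.toAddSubgroup := by
      rw [Module.Finite.iff_addGroup_fg]
      exact (AddGroup.fg_iff_addSubgroup_fg _).2 hfg
    exact h
  have : IsAddTorsionFree A := inferInstance
  have : Module.IsTorsionFree ℤ O :=
    Function.Injective.moduleIsTorsionFree (Subtype.val : O → A) Subtype.val_injective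
      (fun c x => by simp)
  have : Module.Free ℤ O := inferInstance
  let b := Module.finBasis ℤ O
  let b' : Fin (Module.finrank ℤ O) → A := fun k => (b k : A)
  have hli : LinearIndependent ℚ b' := by
    rw [← LinearIndependent.iff_fractionRing ℤ ℚ]
    exact b.linearIndependent.map' (O.subtype.toAddMonoidHom.toIntLinearMap)
      (LinearMap.ker_eq_bot.2 Subtype.val_injective)
  have hexp : ∀ y : O, (y : A) = ∑ k, b.repr y k • b' k := by
    intro y
    conv_lhs => rw [← b.sum_repr y]
    simp [b']
  have hspan : ⊤ ≤ Submodule.span ℚ (Set.range b') := by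
    rw [← hsp, Submodule.span_le]
    intro y hy
    have hy2 := hexp ⟨y, hy⟩
    simp only at hy2
    rw [hy2]
    refine Submodule.sum_mem _ fun k _ => ?_
    exact zsmul_mem (Submodule.subset_span (Set.mem_range_self k)) _
  have hcard : Module.finrank ℤ O = n ^ 2 := by
    rw [← hd, Module.finrank_eq_card_basis (Module.Basis.mk hli hspan), Fintype.card_fin]
  have hli2 := aux_li hn ι hc b' hli
  have : Nonempty (Fin (Module.finrank ℤ O)) := ⟨⟨0, by rw [hcard]; positivity⟩⟩
  let B := basisOfLinearIndependentOfCardEqFinrank hli2 (by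
    rw [Fintype.card_fin, hcard, Module.finrank_matrix]; simp [sq])
  have hB : ∀ k, B k = ι (b' k) := fun k => by simp [B]
  let M : Matrix (Fin (Module.finrank ℤ O)) (Fin (Module.finrank ℤ O)) ℤ :=
    fun k l => b.repr (⟨x, hx⟩ * b l) k
  refine ⟨M.det, ?_⟩
  rw [← aux_det, ← LinearMap.det_toMatrix B]
  have : LinearMap.toMatrix B B (LinearMap.mulLeft ℝ (ι x)) = (Int.castRingHom ℝ).mapMatrix M := by
    ext k l
    rw [LinearMap.toMatrix_apply, LinearMap.mulLeft_apply, hB, ← map_mul]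
    have h1 : x * b' l = ∑ k, b.repr (⟨x, hx⟩ * b l) k • b' k := hexp (⟨x, hx⟩ * b l)
    have h2 : ι (x * b' l) = ∑ k, ((M k l : ℤ) : ℝ) • B k := by
      rw [h1, map_sum]
      refine Finset.sum_congr rfl fun k _ => ?_
      rw [map_zsmul, hB, Int.cast_smul_eq_zsmul]
    rw [h2, B.repr_sum_self]
    simp
  rw [this, ← RingHom.map_det]
  simp

lemma aux_so_one {n : ℕ} (hodd : Odd n) (k : Matrix (Fin n) (Fin n) ℝ) (hk : IsSO k) :
    (k - 1).det = 0 := by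
  obtain ⟨h1, h2⟩ := hk
  have h3 : kᵀ * (k - 1) = -(k - 1)ᵀ := by
    rw [mul_sub, h1, mul_one, transpose_sub, transpose_one, neg_sub]
  have h4 := congrArg Matrix.det h3
  rw [det_mul, det_transpose, h2, det_neg, det_transpose, Fintype.card_fin, hodd.neg_one_pow] at h4
  linarith

lemma aux_so_compact (n : ℕ) : IsCompact {k : Matrix (Fin n) (Fin n) ℝ | IsSO k} := by
  have hcl : IsClosed {k : Matrix (Fin n) (Fin n) ℝ | IsSO k} := by
    have h1 : IsClosed {k : Matrix (Fin n) (Fin n) ℝ | kᵀ * k = 1} :=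
      isClosed_eq (by fun_prop) continuous_const
    have h2 : IsClosed {k : Matrix (Fin n) (Fin n) ℝ | k.det = 1} :=
      isClosed_eq (by fun_prop) continuous_const
    exact h1.inter h2
  have hK : IsCompact (Set.pi Set.univ fun _ : Fin n => Set.pi Set.univ fun _ : Fin n =>
      Set.Icc (-1 : ℝ) 1) :=
    isCompact_univ_pi fun _ => isCompact_univ_pi fun _ => isCompact_Icc
  refine IsCompact.of_isClosed_subset hK hcl ?_
  intro k hk i _ j _
  have hu : k ∈ Matrix.unitaryGroup (Fin n) ℝ := by
    rw [Matrix.mem_unitaryGroup_iff']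
    simpa [star_eq_conjTranspose, conjTranspose_eq_transpose_of_trivial] using hk.1
  have := entry_norm_bound_of_unitary hu i j
  rw [Real.norm_eq_abs] at this
  exact abs_le.1 this

lemma aux_rho {n : ℕ} (hodd : Odd n) : ∃ ρ : ℝ, 0 < ρ ∧
    ∀ g k : Matrix (Fin n) (Fin n) ℝ, IsSO k → (∀ i j, |(g - k) i j| < ρ) →
      |(g - 1).det| < 1 := by
  let f : Matrix (Fin n) (Fin n) ℝ × Matrix (Fin n) (Fin n) ℝ → ℝ := fun p => (p.2 + p.1 - 1).det
  have hf : Continuous f := by fun_prop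
  have hopen : IsOpen (f ⁻¹' Set.Ioo (-1) 1) := isOpen_Ioo.preimage hf
  obtain ⟨u, v, hu, hv, hsu, htv, huv⟩ := generalized_tube_lemma (aux_so_compact n)
    (isCompact_singleton (x := (0 : Matrix (Fin n) (Fin n) ℝ))) hopen (by
      rintro ⟨k, e⟩ ⟨hk, he⟩
      rw [Set.mem_singleton_iff] at he
      simp only at he
      subst he
      simp only [Set.mem_preimage, f, zero_add]
      rw [aux_so_one hodd k hk]
      norm_num)
  have hv0 : (0 : Fin n → Fin n → ℝ) ∈ (v : Set (Fin n → Fin n → ℝ)) := htv rfl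
  obtain ⟨ρ, hρ, hball⟩ := Metric.isOpen_iff.1 (show IsOpen (v : Set (Fin n → Fin n → ℝ)) from hv) 0 hv0
  refine ⟨ρ, hρ, fun g k hk hgk => ?_⟩
  have hmem : (g - k) ∈ v := by
    have key : ∀ e : Fin n → Fin n → ℝ, (∀ i j, |e i j| < ρ) → e ∈ Metric.ball 0 ρ := by
      intro e he
      rw [Metric.mem_ball, dist_zero_right, pi_norm_lt_iff hρ]
      intro i
      rw [pi_norm_lt_iff hρ]
      intro j
      exact he i j
    exact hball (key (fun i j => (g - k) i j) hgk)
  have h := huv (Set.mk_mem_prod (hsu hk) hmem)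
  simp only [Set.mem_preimage, f, sub_add_cancel] at h
  exact abs_lt.2 h

/-- For odd `n ≥ 3` there is `ρ > 0`, depending only on `n`, such that for
every real-split central division `ℚ`-algebra `A` of degree `n`, every order `𝒪 ⊆ A`, every
`z ∈ GL_n(ℝ)` and every `γ ∈ 𝒪` with `nr γ = 1`: if some `k ∈ SO(n)` satisfies that every
entry of `z⁻¹ (ι γ) z - k` has absolute value `< ρ`, then `γ = 1`. -/
theorem stmt3 (n : ℕ) (hn : 3 ≤ n) (hodd : Odd n) :
    ∃ ρ : ℝ, 0 < ρ ∧
      ∀ (A : Type) [DivisionRing A] [CharZero A]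
        (ι : A →ₐ[ℚ] Matrix (Fin n) (Fin n) ℝ),
        Function.Injective ι →
        Subalgebra.center ℚ A = ⊥ →
        Module.finrank ℚ A = n ^ 2 →
        ∀ O : Subring A, IsOrder A O →
        ∀ (z : Matrix.GeneralLinearGroup (Fin n) ℝ) (γ : A), γ ∈ O → (ι γ).det = 1 →
        (∃ k : Matrix (Fin n) (Fin n) ℝ, IsSO k ∧
          ∀ i j, |(((↑z⁻¹ : Matrix (Fin n) (Fin n) ℝ) * ι γ *
              (↑z : Matrix (Fin n) (Fin n) ℝ) - k)) i j| < ρ) →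
        γ = 1 := by
  obtain ⟨ρ, hρ, H⟩ := aux_rho (n := n) hodd
  refine ⟨ρ, hρ, ?_⟩
  intro A _ _ ι _ hc hd O hO z γ hγ _ ⟨k, hk, hgk⟩
  have h1 := H _ k hk hgk
  have h2 : (↑z⁻¹ : Matrix (Fin n) (Fin n) ℝ) * ι γ * (↑z : Matrix (Fin n) (Fin n) ℝ) - 1
      = (↑z⁻¹ : Matrix (Fin n) (Fin n) ℝ) * ι (γ - 1) * (↑z : Matrix (Fin n) (Fin n) ℝ) := by
    rw [map_sub, map_one, mul_sub, sub_mul, mul_one, Units.inv_mul]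
  have h3 : ((↑z⁻¹ : Matrix (Fin n) (Fin n) ℝ) * ι (γ - 1) *
      (↑z : Matrix (Fin n) (Fin n) ℝ)).det = (ι (γ - 1)).det := by
    rw [det_mul, det_mul, mul_right_comm, ← det_mul, Units.inv_mul, det_one, one_mul]
  rw [h2, h3] at h1
  obtain ⟨m, hm⟩ := aux_int (by omega) ι hc hd O hO (γ - 1) (O.sub_mem hγ O.one_mem)
  have h4 : |(m : ℝ)| < 1 := by
    rw [← hm, abs_pow]
    exact pow_lt_one₀ (abs_nonneg _) h1 (by omega)
  have h5 : m = 0 := by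
    rw [← Int.abs_lt_one_iff]
    exact_mod_cast h4
  have h6 : (ι (γ - 1)).det = 0 := by
    rw [h5, Int.cast_zero] at hm
    exact pow_eq_zero_iff (by omega) |>.1 hm
  by_contra hne
  have h7 : γ - 1 ≠ 0 := sub_ne_zero.2 hne
  have h8 : (ι (γ - 1)).det * (ι (γ - 1)⁻¹).det = 1 := by
    rw [← det_mul, ← map_mul, mul_inv_cancel₀ h7, map_one, det_one]
  rw [h6, zero_mul] at h8
  exact zero_ne_one h8
end

section
/- Let n be an odd positive integer and let A, B ∈ SO(n). Then the commutator AB − BA is a singular matrix: det(AB − BA) = 0. -/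
open Matrix

/-- For odd `n` and `A, B ∈ SO(n)` the commutator `AB - BA` is singular. -/
theorem stmt5 (n : ℕ) (hn : 0 < n) (hodd : Odd n)
    (A B : Matrix (Fin n) (Fin n) ℝ) (hA : IsSO A) (hB : IsSO B) :
    (A * B - B * A).det = 0 := by
  obtain ⟨hA1, hA2⟩ := hA
  obtain ⟨hB1, hB2⟩ := hB
  have hA3 : A * Aᵀ = 1 := mul_eq_one_comm.mp hA1
  have hB3 : B * Bᵀ = 1 := mul_eq_one_comm.mp hB1
  have h1 : (A * B)ᵀ * (A * B) = 1 := by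
    rw [transpose_mul, Matrix.mul_assoc, ← Matrix.mul_assoc Aᵀ, hA1, Matrix.one_mul, hB1]
  have h2 : (B * A) * (B * A)ᵀ = 1 := by
    rw [transpose_mul, Matrix.mul_assoc, ← Matrix.mul_assoc A, hA3, Matrix.one_mul, hB3]
  have key : (A * B)ᵀ * (A * B - B * A) * (B * A)ᵀ = -(A * B - B * A)ᵀ := by
    rw [Matrix.mul_sub, h1, Matrix.sub_mul, Matrix.one_mul, Matrix.mul_assoc, h2,
      Matrix.mul_one, transpose_sub, neg_sub]
  have h := congrArg Matrix.det key
  rw [det_mul, det_mul, det_transpose, det_transpose, det_neg, det_transpose,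
    det_mul A B, det_mul B A, hA2, hB2, Fintype.card_fin, hodd.neg_one_pow] at h
  linarith
end

section
/- Let n ≥ 3 be an odd integer. There exists a constant C > 0 depending only on n such that: for every z ∈ GL_n(ℝ), every δ ∈ (0,1], and all g₁, g₂ ∈ GL_n(ℝ) with det g₁ > 0 and det g₂ > 0, if for each i ∈ {1,2} there exists kᵢ ∈ SO(n) such that every entry of (det gᵢ)^{-1/n} · z⁻¹ gᵢ z − kᵢ has absolute value at most δ, then |det(g₁g₂ − g₂g₁)| ≤ C · δ · (det g₁) · (det g₂). -/
open Matrix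

lemma aux_prod {ι : Type*} (s : Finset ι) (a b : ι → ℝ) (M δ : ℝ) (hM : 1 ≤ M) (hδ : 0 ≤ δ)
    (ha : ∀ i, |a i| ≤ M) (hb : ∀ i, |b i| ≤ M) (hab : ∀ i, |a i - b i| ≤ M * δ) :
    |∏ i ∈ s, a i - ∏ i ∈ s, b i| ≤ s.card * M ^ s.card * δ := by
  classical
  induction s using Finset.induction_on with
  | empty => simp
  | insert x s hx ih =>
    rw [Finset.prod_insert hx, Finset.prod_insert hx, Finset.card_insert_of_notMem hx]
    have hp : |∏ i ∈ s, b i| ≤ M ^ s.card := by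
      rw [Finset.abs_prod]
      exact (Finset.prod_le_prod (fun _ _ => abs_nonneg _) (fun i _ => hb i)).trans (by simp)
    have e : a x * ∏ i ∈ s, a i - b x * ∏ i ∈ s, b i
        = a x * (∏ i ∈ s, a i - ∏ i ∈ s, b i) + (a x - b x) * ∏ i ∈ s, b i := by ring
    rw [e]
    have hM0 : 0 ≤ M := by linarith
    calc _ ≤ |a x| * |∏ i ∈ s, a i - ∏ i ∈ s, b i| + |a x - b x| * |∏ i ∈ s, b i| := by
            rw [← abs_mul, ← abs_mul]; exact abs_add_le _ _
      _ ≤ M * (s.card * M ^ s.card * δ) + (M * δ) * M ^ s.card := by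
            gcongr
            · exact ha x
            · exact hab x
      _ = _ := by push_cast; ring

lemma aux_det_s7 {n : ℕ} (A B : Matrix (Fin n) (Fin n) ℝ) (M δ : ℝ) (hM : 1 ≤ M) (hδ : 0 ≤ δ)
    (ha : ∀ i j, |A i j| ≤ M) (hb : ∀ i j, |B i j| ≤ M) (hab : ∀ i j, |A i j - B i j| ≤ M * δ) :
    |A.det - B.det| ≤ n.factorial * (n * M ^ n * δ) := by
  rw [Matrix.det_apply', Matrix.det_apply', ← Finset.sum_sub_distrib]
  refine (Finset.abs_sum_le_sum_abs _ _).trans ?_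
  refine (Finset.sum_le_card_nsmul _ _ (n * M ^ n * δ) ?_).trans ?_
  · intro σ _
    rw [← mul_sub, abs_mul]
    have h := aux_prod Finset.univ (fun i => A (σ i) i) (fun i => B (σ i) i) M δ hM hδ
      (fun _ => ha _ _) (fun _ => hb _ _) (fun _ => hab _ _)
    have hs : |((Equiv.Perm.sign σ : ℤ) : ℝ)| = 1 := by
      rcases Int.units_eq_one_or (Equiv.Perm.sign σ) with h | h <;> simp [h]
    rw [hs, one_mul]
    simpa using h
  · simp [Finset.card_univ, Fintype.card_perm]

lemma aux_mul {n : ℕ} (A B : Matrix (Fin n) (Fin n) ℝ) (a b : ℝ) (h0 : 0 ≤ a)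
    (ha : ∀ i j, |A i j| ≤ a) (hb : ∀ i j, |B i j| ≤ b) (i j : Fin n) :
    |(A * B) i j| ≤ n * (a * b) := by
  rw [Matrix.mul_apply]
  refine (Finset.abs_sum_le_sum_abs _ _).trans ?_
  refine (Finset.sum_le_card_nsmul _ _ (a * b) ?_).trans ?_
  · intro k _
    rw [abs_mul]
    exact mul_le_mul (ha _ _) (hb _ _) (abs_nonneg _) h0
  · simp

lemma aux_entry {n : ℕ} (k : Matrix (Fin n) (Fin n) ℝ) (h : IsSO k) (i j : Fin n) :
    |k i j| ≤ 1 := by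
  have : k ∈ Matrix.unitaryGroup (Fin n) ℝ := by
    rw [Matrix.mem_unitaryGroup_iff']
    simpa [Matrix.star_eq_conjTranspose, Matrix.conjTranspose_eq_transpose_of_trivial] using h.1
  simpa using entry_norm_bound_of_unitary this i j

lemma aux_zero {n : ℕ} (hodd : Odd n) (k l : Matrix (Fin n) (Fin n) ℝ) (hk : IsSO k)
    (hl : IsSO l) : (k * l - l * k).det = 0 := by
  have hk' : k * kᵀ = 1 := mul_eq_one_comm.mp hk.1
  have hl' : l * lᵀ = 1 := mul_eq_one_comm.mp hl.1
  have hA : (k * l) * (k * l)ᵀ = 1 := by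
    rw [Matrix.transpose_mul, Matrix.mul_assoc, ← Matrix.mul_assoc l, hl', Matrix.one_mul, hk']
  have hB : (l * k)ᵀ * (l * k) = 1 := by
    rw [Matrix.transpose_mul, Matrix.mul_assoc, ← Matrix.mul_assoc lᵀ, hl.1, Matrix.one_mul, hk.1]
  have e : k * l - l * k = (k * l) * (-(k * l - l * k))ᵀ * (l * k) := by
    rw [neg_sub, Matrix.transpose_sub, Matrix.mul_sub, Matrix.sub_mul, hA, Matrix.mul_assoc, hB]
    simp
  have h := congrArg Matrix.det e
  rw [Matrix.det_mul, Matrix.det_mul, Matrix.det_transpose, Matrix.det_neg, Matrix.det_mul k l,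
    Matrix.det_mul l k, hk.2, hl.2, Fintype.card_fin, hodd.neg_one_pow] at h
  linarith

lemma aux_pert {n : ℕ} (hn : 3 ≤ n) (hodd : Odd n) (h₁ h₂ k₁ k₂ : Matrix (Fin n) (Fin n) ℝ)
    (δ : ℝ) (hδ : 0 < δ) (hδ1 : δ ≤ 1) (hk₁ : IsSO k₁) (hk₂ : IsSO k₂)
    (e₁ : ∀ i j, |(h₁ - k₁) i j| ≤ δ) (e₂ : ∀ i j, |(h₂ - k₂) i j| ≤ δ) :
    |(h₁ * h₂ - h₂ * h₁).det| ≤ n.factorial * (n * (8 * n) ^ n * δ) := by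
  have hn' : (3 : ℝ) ≤ n := by exact_mod_cast hn
  have b : ∀ h k : Matrix (Fin n) (Fin n) ℝ, IsSO k → (∀ i j, |(h - k) i j| ≤ δ) →
      ∀ i j, |h i j| ≤ 2 := by
    intro h k hk e i j
    have h1 := aux_entry k hk i j
    have h2 := e i j
    rw [Matrix.sub_apply] at h2
    have := abs_add_le (h i j - k i j) (k i j)
    rw [sub_add_cancel] at this
    linarith
  have b₁ := b h₁ k₁ hk₁ e₁
  have b₂ := b h₂ k₂ hk₂ e₂
  have c₁ := aux_entry k₁ hk₁
  have c₂ := aux_entry k₂ hk₂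
  have key := aux_det_s7 (h₁ * h₂ - h₂ * h₁) (k₁ * k₂ - k₂ * k₁) (8 * n) δ (by linarith) hδ.le
    ?_ ?_ ?_
  · rwa [aux_zero hodd k₁ k₂ hk₁ hk₂, sub_zero] at key
  · intro i j
    have t1 := aux_mul h₁ h₂ 2 2 (by norm_num) b₁ b₂ i j
    have t2 := aux_mul h₂ h₁ 2 2 (by norm_num) b₂ b₁ i j
    rw [Matrix.sub_apply]
    have := abs_sub ((h₁ * h₂) i j) ((h₂ * h₁) i j)
    linarith
  · intro i j
    have t1 := aux_mul k₁ k₂ 1 1 (by norm_num) c₁ c₂ i j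
    have t2 := aux_mul k₂ k₁ 1 1 (by norm_num) c₂ c₁ i j
    rw [Matrix.sub_apply]
    have := abs_sub ((k₁ * k₂) i j) ((k₂ * k₁) i j)
    linarith
  · intro i j
    have t1 := aux_mul (h₁ - k₁) h₂ δ 2 hδ.le e₁ b₂ i j
    have t2 := aux_mul k₁ (h₂ - k₂) 1 δ (by norm_num) c₁ e₂ i j
    have t3 := aux_mul (h₂ - k₂) h₁ δ 2 hδ.le e₂ b₁ i j
    have t4 := aux_mul k₂ (h₁ - k₁) 1 δ (by norm_num) c₂ e₁ i j
    have e : (h₁ * h₂ - h₂ * h₁) - (k₁ * k₂ - k₂ * k₁)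
        = ((h₁ - k₁) * h₂ + k₁ * (h₂ - k₂)) - ((h₂ - k₂) * h₁ + k₂ * (h₁ - k₁)) := by
      noncomm_ring
    rw [← Matrix.sub_apply, e, Matrix.sub_apply, Matrix.add_apply, Matrix.add_apply]
    have hnd : 0 ≤ n * δ := by positivity
    rw [abs_le] at *
    constructor <;> nlinarith

/-- For odd `n ≥ 3` there is `C > 0`, depending only on `n`, such that for
every `z ∈ GL_n(ℝ)`, every `δ ∈ (0,1]` and all `g₁, g₂` with positive determinant that are
`δ`-close to `SO(n)` after conjugating by `z` and renormalising, one has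
`|det (g₁g₂ - g₂g₁)| ≤ C·δ·det g₁·det g₂`. -/
theorem stmt7 (n : ℕ) (hn : 3 ≤ n) (hodd : Odd n) :
    ∃ C : ℝ, 0 < C ∧
      ∀ (z : Matrix.GeneralLinearGroup (Fin n) ℝ) (δ : ℝ), 0 < δ → δ ≤ 1 →
      ∀ g₁ g₂ : Matrix (Fin n) (Fin n) ℝ, 0 < g₁.det → 0 < g₂.det →
      (∃ k₁ : Matrix (Fin n) (Fin n) ℝ, IsSO k₁ ∧
        ∀ i j, |((g₁.det ^ (-(1 : ℝ) / (n : ℝ))) •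
          ((↑z⁻¹ : Matrix (Fin n) (Fin n) ℝ) * g₁ * (↑z : Matrix (Fin n) (Fin n) ℝ)) - k₁) i j| ≤ δ) →
      (∃ k₂ : Matrix (Fin n) (Fin n) ℝ, IsSO k₂ ∧
        ∀ i j, |((g₂.det ^ (-(1 : ℝ) / (n : ℝ))) •
          ((↑z⁻¹ : Matrix (Fin n) (Fin n) ℝ) * g₂ * (↑z : Matrix (Fin n) (Fin n) ℝ)) - k₂) i j| ≤ δ) →
      |(g₁ * g₂ - g₂ * g₁).det| ≤ C * δ * g₁.det * g₂.det := by
  have hn' : (3 : ℝ) ≤ n := by exact_mod_cast hn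
  refine ⟨n.factorial * (n * (8 * n) ^ n), by positivity, ?_⟩
  rintro z δ hδ hδ1 g₁ g₂ hg₁ hg₂ ⟨k₁, hk₁, e₁⟩ ⟨k₂, hk₂, e₂⟩
  have key := aux_pert hn hodd _ _ k₁ k₂ δ hδ hδ1 hk₁ hk₂ e₁ e₂
  have hs : ∀ d : ℝ, 0 < d → (d ^ (-(1 : ℝ) / (n : ℝ))) ^ n = d⁻¹ := by
    intro d hd
    rw [← Real.rpow_natCast, ← Real.rpow_mul hd.le, div_mul_cancel₀ _ (by positivity),
      Real.rpow_neg_one]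
  have s1 := hs _ hg₁
  have s2 := hs _ hg₂
  set a := g₁.det ^ (-(1 : ℝ) / (n : ℝ))
  set b := g₂.det ^ (-(1 : ℝ) / (n : ℝ))
  have hz : (↑z : Matrix (Fin n) (Fin n) ℝ) * (↑z⁻¹ : Matrix (Fin n) (Fin n) ℝ) = 1 :=
    Units.mul_inv z
  generalize (↑z⁻¹ : Matrix (Fin n) (Fin n) ℝ) = w at *
  generalize (↑z : Matrix (Fin n) (Fin n) ℝ) = y at *
  have m : ∀ g h : Matrix (Fin n) (Fin n) ℝ, (w * g * y) * (w * h * y) = w * (g * h) * y := by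
    intro g h
    calc _ = w * g * (y * w) * h * y := by noncomm_ring
      _ = _ := by rw [hz]; noncomm_ring
  have e : (a • (w * g₁ * y)) * (b • (w * g₂ * y)) - (b • (w * g₂ * y)) * (a • (w * g₁ * y))
      = (a * b) • (w * (g₁ * g₂ - g₂ * g₁) * y) := by
    rw [smul_mul_smul_comm, smul_mul_smul_comm, m, m, mul_comm b a, ← smul_sub, Matrix.mul_sub,
      Matrix.sub_mul]
  have hd : y.det * w.det = 1 := by rw [← Matrix.det_mul, hz, Matrix.det_one]
  have ed : ((a * b) • (w * (g₁ * g₂ - g₂ * g₁) * y)).det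
      = (g₁.det)⁻¹ * (g₂.det)⁻¹ * (g₁ * g₂ - g₂ * g₁).det := by
    rw [Matrix.det_smul, Fintype.card_fin, mul_pow, s1, s2, Matrix.det_mul, Matrix.det_mul]
    linear_combination ((g₁.det)⁻¹ * (g₂.det)⁻¹ * (g₁ * g₂ - g₂ * g₁).det) * hd
  rw [e, ed, abs_mul, abs_of_pos (by positivity), ← mul_inv, inv_mul_le_iff₀ (by positivity)] at key
  linarith
end

section
/- Let p ≥ 3 be a prime. There exists a constant C ≥ 1 depending only on p such that: for every real-split central division ℚ-algebra A of degree p, every order 𝒪 ⊆ A, every z ∈ GL_p(ℝ), every δ ∈ (0,1] and every real L ≥ 1, the ℚ-subalgebra of A generated by the union ⋃_{1≤m≤L} 𝒪(m; z, δ) (union over positive integers m ≤ L) is contained in the ℚ-linear span of ⋃_{1≤m≤L^{2p-2}} 𝒪(m; z, C·δ). -/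
open Matrix

/-- The set `𝒪(m; z, δ)` of elements `γ ∈ 𝒪` with `nr γ = m` such that
`m^{-1/n} ⬝ z⁻¹ (ι γ) z` is within `δ` (entrywise) of some `k ∈ SO(n)`. -/
noncomputable def OSet {n : ℕ} {A : Type*} [DivisionRing A] [CharZero A]
    (ι : A →ₐ[ℚ] Matrix (Fin n) (Fin n) ℝ) (O : Subring A)
    (z : Matrix.GeneralLinearGroup (Fin n) ℝ) (m : ℕ) (δ : ℝ) : Set A :=
  {γ | γ ∈ O ∧ (ι γ).det = (m : ℝ) ∧
    ∃ k : Matrix (Fin n) (Fin n) ℝ, IsSO k ∧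
      ∀ i j, |(((m : ℝ) ^ (-(1 : ℝ) / (n : ℝ))) •
        ((↑z⁻¹ : Matrix (Fin n) (Fin n) ℝ) * ι γ * (↑z : Matrix (Fin n) (Fin n) ℝ)) - k) i j| < δ}

open scoped Pointwise

lemma chain_stab {D A : Type*} [DivisionRing D] [Ring A] [Module D A] [Module.Finite D A]
    [IsScalarTower D A A] (S : Set A) (h1 : (1 : A) ∈ S) (h10 : (1 : A) ≠ 0) (d : ℕ) (hd : 1 ≤ d)
    (hb : ∀ k : ℕ, Module.finrank D (Submodule.span D (S ^ k)) ≤ d) :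
    ∀ x ∈ Submodule.span D (S ^ (d - 1)), ∀ s ∈ S, x * s ∈ Submodule.span D (S ^ (d - 1)) := by
  have hmul : ∀ k : ℕ, ∀ x ∈ Submodule.span D (S ^ k), ∀ s ∈ S,
      x * s ∈ Submodule.span D (S ^ (k + 1)) := by
    intro k x hx s hs
    induction hx using Submodule.span_induction with
    | mem x hx =>
      apply Submodule.subset_span
      rw [pow_succ]
      exact Set.mul_mem_mul hx hs
    | zero => simp
    | add x y _ _ hx hy => rw [add_mul]; exact Submodule.add_mem _ hx hy
    | smul a x _ hx => rw [smul_mul_assoc]; exact Submodule.smul_mem _ _ hx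
  have hmono : ∀ k : ℕ, Submodule.span D (S ^ k) ≤ Submodule.span D (S ^ (k + 1)) :=
    fun k => Submodule.span_mono (Set.pow_subset_pow_right h1 (Nat.le_succ k))
  have hstep : ∀ k : ℕ, Submodule.span D (S ^ k) = Submodule.span D (S ^ (k + 1)) →
      Submodule.span D (S ^ (k+1)) = Submodule.span D (S ^ (k + 1 + 1)) := by
    intro k hk
    apply le_antisymm (hmono _)
    rw [Submodule.span_le]
    intro y hy
    rw [pow_succ] at hy
    obtain ⟨x, hx, s, hs, rfl⟩ := hy
    have : x ∈ Submodule.span D (S ^ k) := hk ▸ Submodule.subset_span hx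
    exact hmul k x this s hs
  have key : Submodule.span D (S ^ (d - 1)) = Submodule.span D (S ^ (d - 1 + 1)) := by
    by_contra hne
    have hne' : ∀ j, j ≤ d - 1 →
        Submodule.span D (S ^ (d - 1 - j)) ≠ Submodule.span D (S ^ (d - 1 - j + 1)) := by
      intro j
      induction j with
      | zero => intro _; simpa using hne
      | succ j ih =>
        intro hj h
        apply ih (by omega)
        have := hstep _ h
        have e : d - 1 - (j + 1) + 1 = d - 1 - j := by omega
        rwa [e] at this
    have hgrow : ∀ k, k ≤ d → k + 1 ≤ Module.finrank D (Submodule.span D (S ^ k)) := by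
      intro k
      induction k with
      | zero =>
        intro _
        rw [Nat.zero_add, Nat.one_le_iff_ne_zero]
        intro h
        rw [Submodule.finrank_eq_zero] at h
        have : (1 : A) ∈ Submodule.span D (S ^ 0) := Submodule.subset_span (by simp)
        rw [h] at this
        exact h10 (by simpa using this)
      | succ k ih =>
        intro hk
        have h := ih (by omega)
        have h2 := hne' (d - 1 - k) (by omega)
        have e : d - 1 - (d - 1 - k) = k := by omega
        rw [e] at h2
        have := Submodule.finrank_lt_finrank_of_lt (lt_of_le_of_ne (hmono k) h2)
        omega
    have := hgrow d le_rfl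
    have := hb d
    omega
  intro x hx s hs
  rw [key]
  exact hmul _ x hx s hs

lemma adjoin_sub {F D A : Type*} [Field F] [DivisionRing D] [Ring A] [Algebra F A] [Module D A] [Module F D]
    [IsScalarTower F D A]
    (S : Set A) (h1 : (1 : A) ∈ S) (n : ℕ)
    (hs : ∀ x ∈ Submodule.span D (S ^ n), ∀ s ∈ S, x * s ∈ Submodule.span D (S ^ n))
    (x : A) (hx : x ∈ Algebra.adjoin F S) : x ∈ Submodule.span D (S ^ n) := by
  have h : ∀ y ∈ Submonoid.closure S, y ∈ Submodule.span D (S ^ n) := by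
    intro y hy
    induction hy using Submonoid.closure_induction_right with
    | one => exact Submodule.subset_span (Set.one_mem_pow h1)
    | mul_right x _ y hy ih => exact hs x ih y hy
  have h2 : x ∈ Submodule.span F (Submonoid.closure S : Set A) := by
    rw [← Algebra.adjoin_eq_span]; exact hx
  have h3 : Submodule.span F (Submonoid.closure S : Set A) ≤
      (Submodule.span D (S ^ n)).restrictScalars F := Submodule.span_le.2 h
  exact h3 h2

lemma alg_part (F : Type) [Field F] (p : ℕ) (hp : p.Prime) (A : Type) [DivisionRing A] [Algebra F A]
    (hc : Subalgebra.center F A = ⊥) (hf : Module.finrank F A = p ^ 2)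
    (S : Set A) (h1 : (1 : A) ∈ S) (x : A) (hx : x ∈ Algebra.adjoin F S) :
    x ∈ Submodule.span F (S ^ (2 * p - 2)) := by
  have hp2 := hp.two_le
  have hfin : Module.Finite F A := Module.finite_of_finrank_pos (by rw [hf]; positivity)
  by_cases hS : ∀ s ∈ S, s ∈ (⊥ : Subalgebra F A)
  · have : x ∈ (⊥ : Subalgebra F A) := (Algebra.adjoin_le hS) hx
    obtain ⟨q, rfl⟩ := Algebra.mem_bot.1 this
    rw [Algebra.algebraMap_eq_smul_one]
    exact Submodule.smul_mem _ _ (Submodule.subset_span (Set.one_mem_pow h1))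
  push Not at hS
  obtain ⟨g, hgS, hg⟩ := hS
  set T : Set A := {1, g} with hT
  have hTS : T ⊆ S := by rintro y (rfl | rfl) <;> assumption
  set K := Algebra.adjoin F T with hK
  have hcomm : ∀ a ∈ K, ∀ b ∈ K, a * b = b * a := by
    have := Algebra.isMulCommutative_adjoin F (s := T) (by
      rintro a (rfl | rfl) b (rfl | rfl) <;> simp)
    intro a ha b hb
    have := mul_comm' (⟨a, ha⟩ : Algebra.adjoin F T) ⟨b, hb⟩
    exact congrArg Subtype.val this
  letI : DivisionRing K := divisionRingOfFiniteDimensional F K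
  have hmul : Module.finrank F K * Module.finrank K A = p ^ 2 := by
    rw [← hf]; exact Module.finrank_mul_finrank F K A
  have hKfin : Module.Finite K A := Module.Finite.of_restrictScalars_finite F K A
  have hdK : Module.finrank F K = p := by
    have hdvd : Module.finrank F K ∣ p ^ 2 := ⟨_, hmul.symm⟩
    obtain ⟨i, hi, hie⟩ := (Nat.dvd_prime_pow hp).1 hdvd
    interval_cases i
    · exfalso
      have : K = ⊥ := Subalgebra.eq_bot_of_finrank_one (by simpa using hie)
      exact hg (this ▸ Algebra.subset_adjoin (by simp [hT]))
    · simpa using hie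
    · exfalso
      have hKt : Subalgebra.toSubmodule K = ⊤ := by
        apply Submodule.eq_top_of_finrank_eq
        rw [hf]; exact hie
      have : Subalgebra.center F A = ⊤ := by
        rw [eq_top_iff]
        intro a _
        rw [Subalgebra.mem_center_iff]
        intro b
        have ha : a ∈ Subalgebra.toSubmodule K := by rw [hKt]; trivial
        have hb : b ∈ Subalgebra.toSubmodule K := by rw [hKt]; trivial
        exact hcomm b hb a ha
      rw [hc] at this
      apply hg
      rw [this]; trivial
  have hdA : Module.finrank K A = p := by
    rw [hdK, pow_two] at hmul
    exact Nat.eq_of_mul_eq_mul_left hp.pos hmul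
  have hA : x ∈ Submodule.span K (S ^ (p - 1)) := by
    apply adjoin_sub S h1 _ _ x hx
    apply chain_stab S h1 one_ne_zero p hp.one_le
    intro k
    rw [← hdA]
    exact Submodule.finrank_le _
  have hKsub : Subalgebra.toSubmodule K ≤ Submodule.span F (S ^ (p - 1)) := by
    intro y hy
    have : y ∈ Submodule.span F (T ^ (p - 1)) := by
      apply adjoin_sub T (by simp [hT]) _ _ y hy
      apply chain_stab T (by simp [hT]) one_ne_zero p hp.one_le
      intro k
      rw [← hdK]
      apply Submodule.finrank_mono (t := Subalgebra.toSubmodule K)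
      rw [Submodule.span_le]
      have : ∀ k : ℕ, T ^ k ⊆ K := by
        intro k
        induction k with
        | zero => simp [K.one_mem]
        | succ k ih =>
          rw [pow_succ]
          rintro _ ⟨a, ha, b, hb, rfl⟩
          exact K.mul_mem (ih ha) (Algebra.subset_adjoin hb)
      exact this k
    exact Submodule.span_mono (Set.pow_subset_pow_left hTS) this
  have hfinal : x ∈ Subalgebra.toSubmodule K * Submodule.span F (S ^ (p - 1)) := by
    clear hx
    induction hA using Submodule.span_induction with
    | mem y hy =>
      rw [← one_mul y]
      exact Submodule.mul_mem_mul K.one_mem (Submodule.subset_span hy)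
    | zero => simp
    | add a b _ _ ha hb => exact Submodule.add_mem _ ha hb
    | smul a y _ hy =>
      have h := Submodule.mul_mem_mul (M := Subalgebra.toSubmodule K) a.2 hy
      rw [← mul_assoc, Subalgebra.isIdempotentElem_toSubmodule K] at h
      exact h
  have := (mul_le_mul' hKsub le_rfl : _ ≤ Submodule.span F (S ^ (p - 1)) * Submodule.span F (S ^ (p - 1))) hfinal
  rw [Submodule.span_mul_span, ← pow_add] at this
  rwa [show 2 * p - 2 = p - 1 + (p - 1) by omega]

lemma so_entry {n : ℕ} {k : Matrix (Fin n) (Fin n) ℝ} (hk : IsSO k) (i j : Fin n) :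
    |k i j| ≤ 1 := by
  have := congrFun (congrFun hk.1 j) j
  rw [Matrix.mul_apply, Matrix.one_apply_eq] at this
  have h2 : kᵀ j i * k i j ≤ ∑ l, kᵀ j l * k l j :=
    Finset.single_le_sum (f := fun l => kᵀ j l * k l j)
      (fun l _ => by rw [Matrix.transpose_apply]; exact mul_self_nonneg _) (Finset.mem_univ i)
  rw [this, Matrix.transpose_apply] at h2
  rw [← sq_le_one_iff_abs_le_one, pow_two]
  exact h2

lemma err_bound {n : ℕ} (hn : 0 < n) {X Y k l : Matrix (Fin n) (Fin n) ℝ} (hk : IsSO k)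
    (hl : IsSO l) {c δ : ℝ} (hc : 1 ≤ c) (hδ : 0 < δ) (hδ1 : δ ≤ 1)
    (hX : ∀ i j, |(X - k) i j| < c * δ) (hY : ∀ i j, |(Y - l) i j| < δ) (i j : Fin n) :
    |(X * Y - k * l) i j| < (n * (1 + 2 * c)) * δ := by
  have e : X * Y - k * l = k * (Y - l) + (X - k) * l + (X - k) * (Y - l) := by noncomm_ring
  rw [e]
  simp only [Matrix.add_apply, Matrix.mul_apply, ← Finset.sum_add_distrib]
  refine (Finset.abs_sum_le_sum_abs _ _).trans_lt ?_
  have : (n * (1 + 2 * c)) * δ = ∑ a : Fin n, ((1 + 2 * c) * δ) := by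
    simp; ring
  rw [this]
  haveI : Nonempty (Fin n) := ⟨⟨0, hn⟩⟩
  apply Finset.sum_lt_sum_of_nonempty Finset.univ_nonempty
  intro a _
  have h1 := so_entry hk i a
  have h2 := so_entry hl a j
  have h3 := hX i a
  have h4 := hY a j
  set u := k i a
  set v := l a j
  set s := (X - k) i a
  set t := (Y - l) a j
  have b1 : |u * t| < δ := by
    rw [abs_mul]; nlinarith [abs_nonneg u, abs_nonneg t]
  have b2 : |s * v| ≤ c * δ := by
    rw [abs_mul]; nlinarith [abs_nonneg s, abs_nonneg v]
  have b3 : |s * t| ≤ c * δ := by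
    rw [abs_mul]; nlinarith [abs_nonneg s, abs_nonneg t]
  have := abs_add_three (u * t) (s * v) (s * t)
  nlinarith

/-- the constants -/
def cst (p : ℕ) : ℕ → ℝ
  | 0 => 1
  | k + 1 => p * (1 + 2 * cst p k)

lemma one_le_cst (p : ℕ) (hp : 1 ≤ p) (k : ℕ) : 1 ≤ cst p k := by
  have hp' : (1 : ℝ) ≤ p := by exact_mod_cast hp
  induction k with
  | zero => simp [cst]
  | succ k ih => simp only [cst]; nlinarith

lemma one_mem_OSet {n : ℕ} {A : Type*} [DivisionRing A] [CharZero A]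
    (ι : A →ₐ[ℚ] Matrix (Fin n) (Fin n) ℝ) (O : Subring A)
    (z : Matrix.GeneralLinearGroup (Fin n) ℝ) {δ : ℝ} (hδ : 0 < δ) : (1 : A) ∈ OSet ι O z 1 δ := by
  refine ⟨O.one_mem, by simp, 1, ⟨by simp, by simp⟩, ?_⟩
  intro i j
  have : (↑z⁻¹ : Matrix (Fin n) (Fin n) ℝ) * (↑z : Matrix (Fin n) (Fin n) ℝ) = 1 := by
    rw [← Units.val_mul]; simp
  simp only [map_one, mul_one, this]
  simpa using hδ

lemma mul_mem_OSet {n : ℕ} (hn : 0 < n) {A : Type*} [DivisionRing A] [CharZero A]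
    (ι : A →ₐ[ℚ] Matrix (Fin n) (Fin n) ℝ) (O : Subring A)
    (z : Matrix.GeneralLinearGroup (Fin n) ℝ) {c δ : ℝ} (hc : 1 ≤ c) (hδ : 0 < δ) (hδ1 : δ ≤ 1)
    {a b : ℕ} {x y : A} (hx : x ∈ OSet ι O z a (c * δ)) (hy : y ∈ OSet ι O z b δ) :
    x * y ∈ OSet ι O z (a * b) ((n * (1 + 2 * c)) * δ) := by
  obtain ⟨hxO, hxd, k, hk, hxk⟩ := hx
  obtain ⟨hyO, hyd, l, hl, hyl⟩ := hy
  refine ⟨O.mul_mem hxO hyO, by simp [hxd, hyd], k * l, ⟨?_, ?_⟩, ?_⟩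
  · rw [Matrix.transpose_mul, Matrix.mul_assoc, ← Matrix.mul_assoc kᵀ, hk.1, Matrix.one_mul, hl.1]
  · rw [Matrix.det_mul, hk.2, hl.2, one_mul]
  · have hz : (↑z : Matrix (Fin n) (Fin n) ℝ) * (↑z⁻¹ : Matrix (Fin n) (Fin n) ℝ) = 1 := by
      rw [← Units.val_mul]; simp
    have := err_bound hn hk hl hc hδ hδ1 hxk hyl
    rw [Matrix.smul_mul, Matrix.mul_smul, smul_smul, ← Real.mul_rpow (by positivity) (by positivity)]
      at this
    rw [map_mul, Nat.cast_mul]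
    generalize (↑z⁻¹ : Matrix (Fin n) (Fin n) ℝ) = w at *
    have e : w * ι x * (↑z : Matrix (Fin n) (Fin n) ℝ) * (w * ι y * (↑z : Matrix (Fin n) (Fin n) ℝ))
        = w * (ι x * ι y) * (↑z : Matrix (Fin n) (Fin n) ℝ) := by
      simp only [Matrix.mul_assoc]
      rw [← Matrix.mul_assoc (↑z : Matrix (Fin n) (Fin n) ℝ) w, hz, Matrix.one_mul]
    rw [e] at this
    exact this

/-- For a prime `p ≥ 3` there is `C ≥ 1`, depending only on `p`, such that
the `ℚ`-subalgebra generated by `⋃_{1 ≤ m ≤ L} 𝒪(m; z, δ)` is contained in the `ℚ`-linear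
span of `⋃_{1 ≤ m ≤ L^(2p-2)} 𝒪(m; z, Cδ)`. -/
theorem stmt8 (p : ℕ) (hp : p.Prime) (hp3 : 3 ≤ p) :
    ∃ C : ℝ, 1 ≤ C ∧
      ∀ (A : Type) [DivisionRing A] [CharZero A]
        (ι : A →ₐ[ℚ] Matrix (Fin p) (Fin p) ℝ),
        Function.Injective ι →
        Subalgebra.center ℚ A = ⊥ →
        Module.finrank ℚ A = p ^ 2 →
        ∀ O : Subring A, IsOrder A O →
        ∀ (z : Matrix.GeneralLinearGroup (Fin p) ℝ) (δ L : ℝ), 0 < δ → δ ≤ 1 → 1 ≤ L →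
        (Algebra.adjoin ℚ
            (⋃ m ∈ {m : ℕ | 1 ≤ m ∧ (m : ℝ) ≤ L}, OSet ι O z m δ) : Set A) ⊆
          (Submodule.span ℚ
            (⋃ m ∈ {m : ℕ | 1 ≤ m ∧ (m : ℝ) ≤ L ^ (2 * p - 2)},
              OSet ι O z m (C * δ)) : Set A) := by
  have hp1 : 1 ≤ p := by omega
  refine ⟨cst p (2 * p - 2), one_le_cst p hp1 _, ?_⟩
  intro A _ _ ι _ hc hf O _ z δ L hδ hδ1 hL x hx
  set S := ⋃ m ∈ {m : ℕ | 1 ≤ m ∧ (m : ℝ) ≤ L}, OSet ι O z m δ with hS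
  have h1 : (1 : A) ∈ S := by
    simp only [hS, Set.mem_iUnion]
    exact ⟨1, ⟨le_rfl, by simpa using hL⟩, one_mem_OSet ι O z hδ⟩
  have hx' := alg_part ℚ p hp A hc hf S h1 x hx
  have hpow : ∀ k : ℕ, S ^ k ⊆
      ⋃ m ∈ {m : ℕ | 1 ≤ m ∧ (m : ℝ) ≤ L ^ k}, OSet ι O z m (cst p k * δ) := by
    intro k
    induction k with
    | zero =>
      rintro y hy
      have : y = 1 := by simpa using hy
      subst this
      simp only [Set.mem_iUnion]
      exact ⟨1, ⟨le_rfl, by simp⟩, by simpa [cst] using one_mem_OSet ι O z hδ⟩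
    | succ k ih =>
      rw [pow_succ]
      rintro _ ⟨u, hu, v, hv, rfl⟩
      have hu' := ih hu
      simp only [hS, Set.mem_iUnion] at hu' hv ⊢
      obtain ⟨a, ⟨ha1, ha2⟩, hua⟩ := hu'
      obtain ⟨b, ⟨hb1, hb2⟩, hvb⟩ := hv
      refine ⟨a * b, ⟨Nat.mul_pos ha1 hb1, ?_⟩,
        mul_mem_OSet (by omega) ι O z (one_le_cst p hp1 k) hδ hδ1 hua hvb⟩
      rw [pow_succ, Nat.cast_mul]
      gcongr
  exact Submodule.span_mono (hpow _) hx'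
end

section
/- Let p ≥ 3 be a prime, δ ∈ (0,1] and ε > 0. There exists a constant c > 0 depending only on p, δ and ε such that: for every real-split central division ℚ-algebra A of degree p, every order 𝒪 ⊆ A with discriminant D = disc(𝒪), every z ∈ GL_p(ℝ), and every real L ≥ 1 with L ≤ c·D^{1/(4p(p-1)) − ε}, the ℚ-linear span of ⋃_{1≤m≤L^{2p-2}} 𝒪(m; z, δ) is a proper ℚ-subspace of A (i.e. not equal to A). -/
open Matrix

/-- `D` is the discriminant of the order `𝒪`: the nonnegative generator of the ideal of `ℤ`
generated by the integers `det (tr (xᵢ xⱼ))` over all `x₁, …, x_{n²} ∈ 𝒪`. -/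
def IsDisc {n : ℕ} {A : Type*} [DivisionRing A] [CharZero A]
    (ι : A →ₐ[ℚ] Matrix (Fin n) (Fin n) ℝ) (O : Subring A) (D : ℕ) : Prop :=
  Ideal.span {d : ℤ | ∃ x : Fin (n ^ 2) → A, (∀ i, x i ∈ O) ∧
      (d : ℝ) = (Matrix.of fun i j => (ι (x i * x j)).trace).det} = Ideal.span {(D : ℤ)}

theorem aux_key {p : ℕ} [NeZero p] {A : Type} [DivisionRing A] [CharZero A]
    (ι : A →ₐ[ℚ] Matrix (Fin p) (Fin p) ℝ) (hc : Subalgebra.center ℚ A = ⊥)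
    {I : Type} [DecidableEq I] (r : I → ℝ) (hr : LinearIndependent ℚ r) (s : Finset I) :
    ∀ a : I → A, ∑ i ∈ s, r i • ι (a i) = 0 → ∀ i ∈ s, a i = 0 := by
  induction s using Finset.induction_on with
  | empty => simp
  | insert j s hj ih =>
    intro a ha
    by_cases h0 : a j = 0
    · rw [Finset.sum_insert hj, h0, map_zero, smul_zero, zero_add] at ha
      intro i hi
      rcases Finset.mem_insert.1 hi with rfl | hi
      · exact h0
      · exact ih a ha i hi
    exfalso
    have h1 : ∑ i ∈ insert j s, r i • ι ((a j)⁻¹ * a i) = 0 := by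
      have : ι ((a j)⁻¹) * ∑ i ∈ insert j s, r i • ι (a i) = 0 := by rw [ha, mul_zero]
      rw [Finset.mul_sum] at this
      rw [← this]
      refine Finset.sum_congr rfl fun i _ => ?_
      rw [map_mul, mul_smul_comm]
    set a' : I → A := fun i => (a j)⁻¹ * a i with ha'
    have haj : a' j = 1 := inv_mul_cancel₀ h0
    change ∑ i ∈ insert j s, r i • ι (a' i) = 0 at h1
    have hcen : ∀ i ∈ s, a' i ∈ Subalgebra.center ℚ A := by
      intro i hi
      rw [Subalgebra.mem_center_iff]
      intro b
      have h2 : ∑ i ∈ s, r i • ι (b * a' i - a' i * b) = 0 := by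
        have : ι b * (∑ i ∈ insert j s, r i • ι (a' i)) -
          (∑ i ∈ insert j s, r i • ι (a' i)) * ι b = 0 := by rw [h1]; simp
        rw [Finset.mul_sum, Finset.sum_mul, ← Finset.sum_sub_distrib, Finset.sum_insert hj, haj] at this
        simp only [map_one, mul_smul_comm, smul_mul_assoc, mul_one, one_mul, sub_self, zero_add] at this
        rw [← this]
        refine Finset.sum_congr rfl fun i _ => ?_
        rw [map_sub, map_mul ι b, map_mul ι (a' i) b, smul_sub]
      exact sub_eq_zero.1 (ih _ h2 i hi)
    have hq : ∀ i, ∃ q : ℚ, i ∈ insert j s → a' i = algebraMap ℚ A q := by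
      intro i
      by_cases hi : i ∈ insert j s
      · rcases Finset.mem_insert.1 hi with rfl | hi
        · exact ⟨1, fun _ => by rw [haj, map_one]⟩
        · have := hcen i hi
          rw [hc, Algebra.mem_bot] at this
          obtain ⟨q, hq⟩ := this
          exact ⟨q, fun _ => hq.symm⟩
      · exact ⟨0, fun h => absurd h hi⟩
    choose q hq using hq
    have h3 : ∑ i ∈ insert j s, q i • r i = 0 := by
      have h4 := congrFun (congrFun h1 0) 0
      rw [Matrix.sum_apply] at h4
      rw [Matrix.zero_apply] at h4
      rw [← h4]
      refine Finset.sum_congr rfl fun i hi => ?_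
      rw [hq i hi, AlgHom.commutes, Matrix.smul_apply, Matrix.algebraMap_matrix_apply]
      simp [Rat.smul_def, mul_comm]
    have h5 := linearIndependent_iff'.1 hr _ q h3 j (Finset.mem_insert_self _ _)
    have h6 := hq j (Finset.mem_insert_self _ _)
    rw [haj, h5, map_zero] at h6
    exact one_ne_zero h6

theorem aux_indep {p : ℕ} [NeZero p] {A : Type} [DivisionRing A] [CharZero A]
    (ι : A →ₐ[ℚ] Matrix (Fin p) (Fin p) ℝ) (hc : Subalgebra.center ℚ A = ⊥)
    {J : Type} [Fintype J] (e : J → A) (he : LinearIndependent ℚ e) :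
    LinearIndependent ℝ (fun j => ι (e j)) := by
  classical
  rw [Fintype.linearIndependent_iff]
  intro c hcz k
  let B := Module.Basis.ofVectorSpace ℚ ℝ
  let S : Finset _ := Finset.univ.biUnion fun j => (B.repr (c j)).support
  have hexp : ∀ j, c j = ∑ i ∈ S, B.repr (c j) i • B i := by
    intro j
    conv_lhs => rw [← B.linearCombination_repr (c j)]
    rw [Finsupp.linearCombination_apply, Finsupp.sum]
    refine Finset.sum_subset (Finset.subset_biUnion_of_mem (fun j => (B.repr (c j)).support) (Finset.mem_univ j)) ?_
    intro x _ hx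
    rw [Finsupp.notMem_support_iff.1 hx, zero_smul]
  have h1 : ∑ i ∈ S, B i • ι (∑ j, B.repr (c j) i • e j) = 0 := by
    rw [← hcz]
    simp_rw [map_sum, Finset.smul_sum]
    rw [Finset.sum_comm]
    refine Finset.sum_congr rfl fun j _ => ?_
    conv_rhs => rw [hexp j]
    rw [Finset.sum_smul]
    refine Finset.sum_congr rfl fun i _ => ?_
    rw [map_smul, smul_comm, smul_assoc]
  have h2 := aux_key ι hc B B.linearIndependent S _ h1
  rw [hexp k]
  refine Finset.sum_eq_zero fun i hi => ?_
  rw [Fintype.linearIndependent_iff.1 he _ (h2 i hi) k, zero_smul]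

theorem aux_trace_mulLeft {p : ℕ} (M : Matrix (Fin p) (Fin p) ℝ) :
    LinearMap.trace ℝ _ (LinearMap.mulLeft ℝ M) = p * M.trace := by
  rw [LinearMap.trace_eq_matrix_trace ℝ (Matrix.stdBasis ℝ (Fin p) (Fin p)), Matrix.trace]
  simp only [Matrix.diag_apply, LinearMap.toMatrix_apply, Fintype.sum_prod_type,
    LinearMap.mulLeft_apply]
  have : ∀ i j, (Matrix.stdBasis ℝ (Fin p) (Fin p)).repr
      (M * Matrix.stdBasis ℝ (Fin p) (Fin p) (i, j)) (i, j) = M i i := by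
    intro i j
    rw [Matrix.stdBasis_eq_single]
    have : ∀ N : Matrix (Fin p) (Fin p) ℝ, (Matrix.stdBasis ℝ (Fin p) (Fin p)).repr N (i, j) = N i j := by
      intro N
      simp [Matrix.stdBasis]
    rw [this]
    simp
  simp_rw [this]
  simp [Matrix.trace, Finset.mul_sum]

theorem aux_rat {p : ℕ} [NeZero p] {A : Type} [DivisionRing A] [CharZero A]
    (ι : A →ₐ[ℚ] Matrix (Fin p) (Fin p) ℝ) (hc : Subalgebra.center ℚ A = ⊥)
    (e : Module.Basis (Fin (p ^ 2)) ℚ A) (x : A) : ∃ q : ℚ, (ι x).trace = q := by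
  have hli := aux_indep ι hc e e.linearIndependent
  have : Nonempty (Fin (p ^ 2)) := ⟨⟨0, pow_pos (NeZero.pos p) 2⟩⟩
  let E := basisOfLinearIndependentOfCardEqFinrank hli (by simp [sq, Module.finrank_matrix])
  have hE : ∀ j, E j = ι (e j) := fun j => by simp [E]
  let N := LinearMap.toMatrix e e (LinearMap.mulLeft ℚ x)
  have hN : LinearMap.toMatrix E E (LinearMap.mulLeft ℝ (ι x)) = N.map (algebraMap ℚ ℝ) := by
    ext i j
    rw [LinearMap.toMatrix_apply, LinearMap.mulLeft_apply, hE, ← map_mul,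
      ← e.sum_repr (x * e j), map_sum]
    simp_rw [map_smul, ← hE]
    have : ∀ k, (e.repr (x * e j)) k • E k = ((e.repr (x * e j) k : ℚ) : ℝ) • E k := fun k => by
      rw [Rat.cast_smul_eq_qsmul]
    simp_rw [this]
    rw [E.repr_sum_self]
    have hNij : N i j = e.repr (x * e j) i := by
      simp only [N]
      rw [LinearMap.toMatrix_apply, LinearMap.mulLeft_apply]
    rw [Matrix.map_apply, hNij]
    rfl
  have h1 := aux_trace_mulLeft (ι x)
  rw [LinearMap.trace_eq_matrix_trace ℝ E, hN] at h1
  have h2 : (N.map (algebraMap ℚ ℝ)).trace = ((N.trace : ℚ) : ℝ) := by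
    simp [Matrix.trace]
  rw [h2] at h1
  refine ⟨N.trace / p, ?_⟩
  have : (p : ℝ) ≠ 0 := NeZero.ne _
  push_cast
  rw [h1]; field_simp

theorem aux_int_s9 {p : ℕ} {A : Type} [DivisionRing A] [CharZero A]
    (ι : A →ₐ[ℚ] Matrix (Fin p) (Fin p) ℝ) (O : Subring A) (hO : O.toAddSubgroup.FG)
    (x : A) (hx : x ∈ O) : IsIntegral ℤ (ι x).trace := by
  have hfg : (AddSubgroup.toIntSubmodule O.toAddSubgroup).FG := by
    rw [Submodule.fg_iff_addSubgroup_fg]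
    exact hO
  have hxi : IsIntegral ℤ x :=
    IsIntegral.of_mem_of_fg (subalgebraOfSubring O) hfg x hx
  let φ : A →+* Matrix (Fin p) (Fin p) ℂ := (RingHom.mapMatrix Complex.ofRealHom).comp ι.toRingHom
  have hM : IsIntegral ℤ (φ x) := hxi.map φ.toIntAlgHom
  obtain ⟨f, hf, hfx⟩ := hM
  have h1 : IsIntegral ℤ (φ x).trace := by
    rw [Matrix.trace_eq_sum_roots_charpoly]
    refine IsIntegral.multiset_sum ?_
    intro r hr
    refine ⟨f, hf, ?_⟩
    have hr' := Matrix.mem_spectrum_of_isRoot_charpoly (Polynomial.isRoot_of_mem_roots hr)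
    have h2 := spectrum.subset_polynomial_aeval (φ x) (f.map (algebraMap ℤ ℂ)) ⟨r, hr', rfl⟩
    rw [Polynomial.aeval_map_algebraMap, Polynomial.aeval_def, hfx] at h2
    rcases isEmpty_or_nonempty (Fin p) with h | h
    · have := Subsingleton.elim (1 : Matrix (Fin p) (Fin p) ℂ) 0
      rw [spectrum.of_subsingleton] at h2
      exact absurd h2 (Set.notMem_empty _)
    · rw [spectrum.zero_eq] at h2
      simpa [Polynomial.eval_map] using h2
  have h3 : (φ x).trace = algebraMap ℝ ℂ (ι x).trace := by
    simp [φ, Matrix.trace]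
  rw [h3] at h1
  exact (isIntegral_algebraMap_iff (algebraMap ℝ ℂ).injective).1 h1

theorem aux_nondeg {p N : ℕ} (y : Fin N → Matrix (Fin p) (Fin p) ℝ)
    (hli : LinearIndependent ℝ y) (hN : Submodule.span ℝ (Set.range y) = ⊤) :
    (Matrix.of fun i j => (y i * y j).trace).det ≠ 0 := by
  intro h
  obtain ⟨v, hv, hv0⟩ := Matrix.exists_mulVec_eq_zero_iff.2 h
  apply hv
  set Y := ∑ j, v j • y j with hY
  have h1 : ∀ i, (y i * Y).trace = 0 := by
    intro i
    have := congrFun hv0 i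
    rw [Matrix.mulVec, dotProduct] at this
    simp only [Matrix.of_apply, Pi.zero_apply] at this
    rw [← this, hY, Finset.mul_sum, Matrix.trace_sum]
    refine Finset.sum_congr rfl fun j _ => ?_
    rw [mul_smul_comm, Matrix.trace_smul, smul_eq_mul, mul_comm]
  have h2 : ∀ M : Matrix (Fin p) (Fin p) ℝ, (M * Y).trace = 0 := by
    intro M
    have hM : M ∈ Submodule.span ℝ (Set.range y) := hN ▸ Submodule.mem_top
    induction hM using Submodule.span_induction with
    | mem x hx => obtain ⟨i, rfl⟩ := hx; exact h1 i
    | zero => simp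
    | add a b _ _ ha hb => rw [add_mul, Matrix.trace_add, ha, hb, add_zero]
    | smul c a _ ha => rw [smul_mul_assoc, Matrix.trace_smul, ha, smul_zero]
  have h3 : Y = 0 := Matrix.trace_conjTranspose_mul_self_eq_zero_iff.1 (h2 _)
  funext i
  exact Fintype.linearIndependent_iff.1 hli v h3 i

theorem aux_so {n : ℕ} (k : Matrix (Fin n) (Fin n) ℝ) (hk : IsSO k) (i j : Fin n) :
    |k i j| ≤ 1 := by
  have h := congrFun (congrFun hk.1 j) j
  rw [Matrix.mul_apply, Matrix.one_apply_eq] at h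
  have h2 : k i j * k i j ≤ ∑ l, kᵀ j l * k l j :=
    Finset.single_le_sum (f := fun l => kᵀ j l * k l j)
      (fun l _ => mul_self_nonneg (k l j)) (Finset.mem_univ i)
  rw [h] at h2
  rw [abs_le]
  constructor <;> nlinarith

theorem aux_entry_s9 {p : ℕ} [NeZero p] {A : Type} [DivisionRing A] [CharZero A]
    (ι : A →ₐ[ℚ] Matrix (Fin p) (Fin p) ℝ) (O : Subring A)
    (z : Matrix.GeneralLinearGroup (Fin p) ℝ) (m : ℕ) (hm : 1 ≤ m) (δ : ℝ) (hδ1 : δ ≤ 1)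
    (T : ℝ) (hT : 0 ≤ T) (hmT : (m : ℝ) ≤ T ^ p) (x : A) (hx : x ∈ OSet ι O z m δ) (i j : Fin p) :
    |((↑z⁻¹ : Matrix (Fin p) (Fin p) ℝ) * ι x * (↑z : Matrix (Fin p) (Fin p) ℝ)) i j| ≤ 2 * T := by
  obtain ⟨_, _, k, hk, hE⟩ := hx
  have hE := hE i j
  set B := (↑z⁻¹ : Matrix (Fin p) (Fin p) ℝ) * ι x * (↑z : Matrix (Fin p) (Fin p) ℝ)
  rw [Matrix.sub_apply, Matrix.smul_apply, smul_eq_mul] at hE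
  have hk1 := aux_so k hk i j
  have hm0 : (0 : ℝ) < m := by exact_mod_cast hm
  set s := (m : ℝ) ^ (-(1 : ℝ) / (p : ℝ)) with hs
  have hs0 : 0 < s := Real.rpow_pos_of_pos hm0 _
  have hsT : 1 ≤ s * T := by
    have hp0 : (p : ℝ) ≠ 0 := NeZero.ne _
    have : s ^ p * m = 1 := by
      rw [hs, ← Real.rpow_natCast, ← Real.rpow_mul hm0.le, div_mul_cancel₀ _ hp0, Real.rpow_neg_one,
        inv_mul_cancel₀ hm0.ne']
    by_contra hlt
    push Not at hlt
    have h1 : (s * T) ^ p < 1 := pow_lt_one₀ (by positivity) hlt (NeZero.ne p)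
    rw [mul_pow] at h1
    have := mul_le_mul_of_nonneg_left hmT (pow_nonneg hs0.le p)
    linarith
  have h2 : |s * B i j| ≤ 2 := by
    have := abs_add_le (s * B i j - k i j) (k i j)
    rw [sub_add_cancel] at this
    linarith
  rw [abs_mul, abs_of_pos hs0] at h2
  by_contra hlt
  push Not at hlt
  have := mul_lt_mul_of_pos_left hlt hs0
  linarith

theorem aux_tr {p : ℕ} (M N : Matrix (Fin p) (Fin p) ℝ) (z : Matrix.GeneralLinearGroup (Fin p) ℝ)
    (T : ℝ) (hT : 0 ≤ T)
    (hM : ∀ i j, |((↑z⁻¹ : Matrix (Fin p) (Fin p) ℝ) * M * (↑z : Matrix (Fin p) (Fin p) ℝ)) i j| ≤ 2 * T)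
    (hN : ∀ i j, |((↑z⁻¹ : Matrix (Fin p) (Fin p) ℝ) * N * (↑z : Matrix (Fin p) (Fin p) ℝ)) i j| ≤ 2 * T) :
    |(M * N).trace| ≤ 4 * p ^ 2 * T ^ 2 := by
  set z' : Matrix (Fin p) (Fin p) ℝ := (↑z⁻¹ : Matrix (Fin p) (Fin p) ℝ)
  set w : Matrix (Fin p) (Fin p) ℝ := (↑z : Matrix (Fin p) (Fin p) ℝ)
  have hw : w * z' = 1 := z.mul_inv
  have h1 : (M * N).trace = ((z' * M * w) * (z' * N * w)).trace := by
    have : (z' * M * w) * (z' * N * w) = z' * (M * N * w) := by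
      calc _ = z' * M * (w * z') * N * w := by simp only [Matrix.mul_assoc]
        _ = _ := by rw [hw]; simp only [Matrix.mul_assoc, Matrix.one_mul]
    rw [this, Matrix.trace_mul_comm z', Matrix.mul_assoc _ w, hw, Matrix.mul_one]
  rw [h1, Matrix.trace]
  simp only [Matrix.diag_apply]
  simp_rw [Matrix.mul_apply (M := z' * M * w)]
  calc _ ≤ ∑ i, ∑ j, |(z' * M * w) i j * (z' * N * w) j i| :=
        (Finset.abs_sum_le_sum_abs _ _).trans (Finset.sum_le_sum fun i _ => Finset.abs_sum_le_sum_abs _ _)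
    _ ≤ ∑ i : Fin p, ∑ j : Fin p, (2 * T) * (2 * T) := by
        refine Finset.sum_le_sum fun i _ => Finset.sum_le_sum fun j _ => ?_
        rw [abs_mul]
        exact mul_le_mul (hM i j) (hN j i) (abs_nonneg _) (by positivity)
    _ = _ := by simp; ring

/-- For a prime `p ≥ 3`, `δ ∈ (0,1]` and `ε > 0` there is `c > 0`,
depending only on `p, δ, ε`, such that whenever `1 ≤ L ≤ c · D^(1/(4p(p-1)) - ε)`, the
`ℚ`-linear span of `⋃_{1 ≤ m ≤ L^(2p-2)} 𝒪(m; z, δ)` is a proper subspace of `A`. -/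
theorem stmt9 (p : ℕ) (hp : p.Prime) (hp3 : 3 ≤ p) (δ ε : ℝ)
    (hδ0 : 0 < δ) (hδ1 : δ ≤ 1) (hε : 0 < ε) :
    ∃ c : ℝ, 0 < c ∧
      ∀ (A : Type) [DivisionRing A] [CharZero A]
        (ι : A →ₐ[ℚ] Matrix (Fin p) (Fin p) ℝ),
        Function.Injective ι →
        Subalgebra.center ℚ A = ⊥ →
        Module.finrank ℚ A = p ^ 2 →
        ∀ O : Subring A, IsOrder A O →
        ∀ D : ℕ, IsDisc ι O D →
        ∀ z : Matrix.GeneralLinearGroup (Fin p) ℝ,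
        ∀ L : ℝ, 1 ≤ L → L ≤ c * (D : ℝ) ^ ((1 : ℝ) / (4 * p * (p - 1)) - ε) →
        Submodule.span ℚ
            (⋃ m ∈ {m : ℕ | 1 ≤ m ∧ (m : ℝ) ≤ L ^ (2 * p - 2)}, OSet ι O z m δ) ≠ ⊤ := by
  have hp0 : 0 < p := hp.pos
  have : NeZero p := ⟨hp0.ne'⟩
  set K : ℝ := (p ^ 2).factorial * (4 * (p : ℝ) ^ 2) ^ (p ^ 2) with hK
  have hK0 : 0 < K := by positivity
  refine ⟨1 / (2 * K + 1), by positivity, ?_⟩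
  intro A _ _ ι hι hc hfr O hO D hD z L hL1 hL hspan
  obtain ⟨b, hbs, hbspan, hbli⟩ := exists_linearIndependent ℚ
    (⋃ m ∈ {m : ℕ | 1 ≤ m ∧ (m : ℝ) ≤ L ^ (2 * p - 2)}, OSet ι O z m δ)
  rw [hspan] at hbspan
  let e0 : Module.Basis b ℚ A := Module.Basis.mk hbli (by simp [hbspan])
  have : Module.Finite ℚ A := Module.finite_of_finrank_pos (by rw [hfr]; positivity)
  have : Fintype b := FiniteDimensional.fintypeBasisIndex e0
  have hcard : Fintype.card b = p ^ 2 := by rw [← hfr, Module.finrank_eq_card_basis e0]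
  let e : Module.Basis (Fin (p ^ 2)) ℚ A := e0.reindex (Fintype.equivFinOfCardEq hcard)
  have he : ∀ i, e i ∈ b := by
    intro i
    simp [e, e0]
  have hmem : ∀ i, ∃ m : ℕ, (1 ≤ m ∧ (m : ℝ) ≤ L ^ (2 * p - 2)) ∧ e i ∈ OSet ι O z m δ := by
    intro i
    have := hbs (he i)
    simp only [Set.mem_iUnion, Set.mem_ofPred_eq, exists_prop] at this
    exact this
  choose m hm hmO using hmem
  have hL0 : 0 ≤ L := by linarith
  set T : ℝ := (L ^ (2 * p - 2)) ^ ((1 : ℝ) / p) with hTdef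
  have hT : 0 ≤ T := Real.rpow_nonneg (by positivity) _
  have hTp : T ^ p = L ^ (2 * p - 2) := by
    rw [hTdef, one_div, Real.rpow_inv_natCast_pow (by positivity) hp0.ne']
  have hent : ∀ i, ∀ k l, |((↑z⁻¹ : Matrix (Fin p) (Fin p) ℝ) * ι (e i) *
      (↑z : Matrix (Fin p) (Fin p) ℝ)) k l| ≤ 2 * T := fun i k l =>
    aux_entry_s9 ι O z (m i) (hm i).1 δ hδ1 T hT (hTp ▸ (hm i).2) (e i) (hmO i) k l
  set G : Matrix (Fin (p ^ 2)) (Fin (p ^ 2)) ℝ :=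
    Matrix.of fun i j => (ι (e i * e j)).trace with hG
  have hGle : |G.det| ≤ K * L ^ (4 * p * (p - 1)) := by
    have h := Matrix.det_le (A := G) (abv := AbsoluteValue.abs) (x := 4 * (p : ℝ) ^ 2 * T ^ 2) (by
      intro i j
      rw [hG, Matrix.of_apply, map_mul]
      exact aux_tr _ _ z T hT (hent i) (hent j))
    rw [Fintype.card_fin, nsmul_eq_mul, mul_pow, ← mul_assoc] at h
    have h2 : (T ^ 2) ^ (p ^ 2) = L ^ (4 * p * (p - 1)) := by
      calc (T ^ 2) ^ (p ^ 2) = (T ^ p) ^ (2 * p) := by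
            rw [← pow_mul, ← pow_mul]; congr 1; ring
        _ = _ := by
            rw [hTp, ← pow_mul]; congr 1
            obtain ⟨q, rfl⟩ : ∃ q, p = q + 1 := ⟨p - 1, by omega⟩
            have : 2 * (q + 1) - 2 = 2 * q := by omega
            rw [this, Nat.add_sub_cancel]; ring
    rw [h2] at h
    exact h
  -- nondegeneracy
  have hli := aux_indep ι hc e e.linearIndependent
  have : Nonempty (Fin (p ^ 2)) := ⟨⟨0, by positivity⟩⟩
  have hG0 : G.det ≠ 0 := by
    have := aux_nondeg (fun j => ι (e j)) hli
      (hli.span_eq_top_of_card_eq_finrank (by simp [sq, Module.finrank_matrix]))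
    simp_rw [← map_mul] at this
    exact this
  -- integrality
  have hint : ∀ i j, ∃ k : ℤ, G i j = k := by
    intro i j
    have h1 := aux_int_s9 ι O hO.1 (e i * e j) (O.mul_mem (hmO i).1 (hmO j).1)
    exact (IsIntegral.exists_int_iff_exists_rat h1).1 (aux_rat ι hc e _)
  choose g hg using hint
  have hGd : (((Matrix.of g).det : ℤ) : ℝ) = G.det := by
    rw [← eq_intCast (Int.castRingHom ℝ), RingHom.map_det]
    congr 1
    ext i j
    simp [hg]
  set d : ℤ := (Matrix.of g).det with hd
  have hdvd : (D : ℤ) ∣ d := by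
    rw [← Ideal.mem_span_singleton, ← hD]
    exact Ideal.subset_span ⟨e, fun i => (hmO i).1, hGd⟩
  have hd0 : d ≠ 0 := by
    intro h
    rw [h] at hGd
    exact hG0 (by rw [← hGd]; simp)
  have hDpos : 1 ≤ D := by
    rcases Nat.eq_zero_or_pos D with h | h
    · rw [h] at hdvd
      exact absurd (zero_dvd_iff.1 (by simpa using hdvd)) hd0
    · exact h
  have hDle : (D : ℝ) ≤ K * L ^ (4 * p * (p - 1)) := by
    refine le_trans ?_ hGle
    rw [← hGd, ← Int.cast_abs]
    exact_mod_cast Int.le_of_dvd (abs_pos.2 hd0) ((dvd_abs _ _).2 hdvd)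
  -- final computation
  set n : ℕ := 4 * p * (p - 1) with hn
  have hn0 : n ≠ 0 := by
    have : 0 < p - 1 := by omega
    positivity
  have hcast : (4 * (p : ℝ) * (p - 1)) = (n : ℝ) := by
    rw [hn]; push_cast [Nat.cast_sub hp0]; ring
  have hD1 : (1 : ℝ) ≤ D := by exact_mod_cast hDpos
  have h1 : L ≤ 1 / (2 * K + 1) * (D : ℝ) ^ ((n : ℝ)⁻¹) := by
    refine hL.trans ?_
    refine mul_le_mul_of_nonneg_left ?_ (by positivity)
    refine Real.rpow_le_rpow_of_exponent_le hD1 ?_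
    rw [hcast, one_div]; linarith
  have h2 : L ^ n ≤ (1 / (2 * K + 1)) ^ n * D := by
    have := pow_le_pow_left₀ hL0 h1 n
    rwa [mul_pow, Real.rpow_inv_natCast_pow (by positivity) hn0] at this
  have h3 : (1 / (2 * K + 1)) ^ n ≤ 1 / (2 * K + 1) :=
    pow_le_of_le_one (by positivity) (by rw [div_le_one (by positivity)]; linarith) hn0
  have h4 : L ^ n ≤ 1 / (2 * K + 1) * D := h2.trans (mul_le_mul_of_nonneg_right h3 (by linarith))
  have h5 : K * L ^ n ≤ K * (1 / (2 * K + 1) * D) := mul_le_mul_of_nonneg_left h4 hK0.le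
  have h6 : K * (1 / (2 * K + 1) * D) < D := by
    have : K * (1 / (2 * K + 1) * D) = (K / (2 * K + 1)) * D := by ring
    rw [this]
    have h7 : K / (2 * K + 1) < 1 := by rw [div_lt_one (by positivity)]; linarith
    nlinarith
  linarith
end

section
/- Let p ≥ 3 be a prime. There exists a constant C > 0 depending only on p such that: for every real-split central division ℚ-algebra A of degree p, every order 𝒪 ⊆ A, every commutative ℚ-subalgebra E ⊆ A with dim_ℚ E = p (necessarily a field of degree p over ℚ), every z ∈ GL_p(ℝ) and every δ > 0, the number of units ξ ∈ 𝒪^× ∩ E for which there exists k ∈ SO(p) with every entry of nr(ξ)^{-1/p}·z⁻¹(ι ξ)z − k of absolute value less than δ is at most C·(1+δ)^{p-1}. (Here nr(ξ) = ±1 automatically, and t^{1/p} denotes the unique real p-th root of a nonzero real t, p being odd.) -/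
open Matrix

/-- For `p` odd and `t ≠ 0`, `negOddRoot p t` is `t^(-1/p)`, the inverse of the unique real
`p`-th root `sign t · |t|^(1/p)` of `t`. -/
noncomputable def negOddRoot (p : ℕ) (t : ℝ) : ℝ :=
  Real.sign t * |t| ^ (-(1 : ℝ) / (p : ℝ))


lemma aux_indep1 {p : ℕ} (hp : 0 < p) {A : Type} [DivisionRing A] [CharZero A]
    (ι : A →ₐ[ℚ] Matrix (Fin p) (Fin p) ℝ)
    (hc : Subalgebra.center ℚ A = ⊥) {I : Type} [DecidableEq I] (H : I → ℝ)
    (hH : LinearIndependent ℚ H) (n : ℕ) : ∀ (t : Finset I), t.card = n → ∀ (a : I → A),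
    ∑ i ∈ t, H i • ι (a i) = 0 → ∀ i ∈ t, a i = 0 := by
  induction n with
  | zero =>
    intro t ht a _ i hi
    rw [Finset.card_eq_zero] at ht
    simp [ht] at hi
  | succ n ih =>
    intro t ht a ha i₀ hi₀
    by_contra hne
    set a' : I → A := fun i => (a i₀)⁻¹ * a i with ha'
    have h1 : ∑ i ∈ t, H i • ι (a' i) = 0 := by
      have : ι (a i₀)⁻¹ * ∑ i ∈ t, H i • ι (a i) = 0 := by rw [ha, mul_zero]
      rw [Finset.mul_sum] at this
      simpa [ha'] using this
    have h2 : ∀ b : A, ∀ i ∈ t, b * a' i - a' i * b = 0 := by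
      intro b
      have hz : b * a' i₀ - a' i₀ * b = 0 := by simp [ha', hne]
      have h3 : ∑ i ∈ t, H i • ι (b * a' i - a' i * b) = 0 := by
        have e1 : ι b * ∑ i ∈ t, H i • ι (a' i) = 0 := by rw [h1, mul_zero]
        have e2 : (∑ i ∈ t, H i • ι (a' i)) * ι b = 0 := by rw [h1, zero_mul]
        rw [Finset.mul_sum] at e1
        rw [Finset.sum_mul] at e2
        have e3 := congrArg₂ (· - ·) e1 e2
        simp only [← Finset.sum_sub_distrib, sub_zero] at e3
        rw [← e3]
        refine Finset.sum_congr rfl fun i _ => ?_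
        simp [smul_sub]
      rw [← Finset.sum_erase_add t _ hi₀, hz, map_zero, smul_zero, add_zero] at h3
      have h4 := ih (t.erase i₀) (by rw [Finset.card_erase_of_mem hi₀, ht]; rfl) _ h3
      intro i hi
      by_cases hii : i = i₀
      · rw [hii]; exact hz
      · exact h4 i (Finset.mem_erase.2 ⟨hii, hi⟩)
    have h3 : ∀ i, ∃ q : ℚ, i ∈ t → algebraMap ℚ A q = a' i := by
      intro i
      by_cases hi : i ∈ t
      · have : a' i ∈ Subalgebra.center ℚ A := by
          rw [Subalgebra.mem_center_iff]
          intro b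
          exact sub_eq_zero.1 (h2 b i hi)
        rw [hc, Algebra.mem_bot] at this
        obtain ⟨q, hq⟩ := this
        exact ⟨q, fun _ => hq⟩
      · exact ⟨0, fun h => absurd h hi⟩
    choose q hq using h3
    have h4 : ∑ i ∈ t, q i • H i = 0 := by
      have e : ∑ i ∈ t, H i • ι (a' i) = ∑ i ∈ t, (q i • H i) • (1 : Matrix (Fin p) (Fin p) ℝ) := by
        refine Finset.sum_congr rfl fun i hi => ?_
        rw [← hq i hi, AlgHom.commutes, Algebra.algebraMap_eq_smul_one, smul_comm, smul_assoc]
      rw [e, ← Finset.sum_smul] at h1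
      have := congrFun (congrFun h1 ⟨0, hp⟩) ⟨0, hp⟩
      simpa using this
    have h5 := linearIndependent_iff'.1 hH t q h4 i₀ hi₀
    have h6 := hq i₀ hi₀
    rw [h5] at h6
    simp [ha', hne] at h6

lemma aux_indep2 {p : ℕ} (hp : 0 < p) {A : Type} [DivisionRing A] [CharZero A]
    (ι : A →ₐ[ℚ] Matrix (Fin p) (Fin p) ℝ)
    (hc : Subalgebra.center ℚ A = ⊥) {J : Type} [Fintype J] (b : J → A)
    (hb : LinearIndependent ℚ b) : LinearIndependent ℝ (fun j => ι (b j)) := by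
  classical
  rw [Fintype.linearIndependent_iff]
  intro s hs
  let B := Module.Basis.ofVectorSpace ℚ ℝ
  let t := Finset.univ.biUnion fun j => (B.repr (s j)).support
  have hst : ∀ j, s j = ∑ i ∈ t, B.repr (s j) i • B i := by
    intro j
    conv_lhs => rw [← B.linearCombination_repr (s j), Finsupp.linearCombination_apply]
    refine Finsupp.sum_of_support_subset _ ?_ _ (by simp)
    exact Finset.subset_biUnion_of_mem (fun j => (B.repr (s j)).support) (Finset.mem_univ j)
  have h1 : ∑ i ∈ t, B i • ι (∑ j, B.repr (s j) i • b j) = 0 := by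
    rw [← hs]
    conv_rhs => 
      enter [2, j]
      rw [hst j, Finset.sum_smul]
    rw [Finset.sum_comm]
    refine Finset.sum_congr rfl fun i _ => ?_
    rw [map_sum, Finset.smul_sum]
    refine Finset.sum_congr rfl fun j _ => ?_
    rw [map_smul, smul_comm, smul_assoc]
  have h2 := aux_indep1 hp ι hc B B.linearIndependent _ t rfl _ h1
  intro j
  rw [hst j]
  refine Finset.sum_eq_zero fun i hi => ?_
  rw [Fintype.linearIndependent_iff.1 hb _ (h2 i hi) j, zero_smul]

lemma aux_minpoly {p : ℕ} (hp : 0 < p) {A : Type} [DivisionRing A] [CharZero A]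
    (ι : A →ₐ[ℚ] Matrix (Fin p) (Fin p) ℝ)
    (hc : Subalgebra.center ℚ A = ⊥) {F : Type} [Field F] [NumberField F] (j : F →ₐ[ℚ] A) (x : F) :
    minpoly ℝ (ι (j x)) = (minpoly ℚ x).map (algebraMap ℚ ℝ) := by
  have hx : IsIntegral ℚ x := Algebra.IsIntegral.isIntegral x
  have hli : LinearIndependent ℚ (fun i : Fin (minpoly ℚ x).natDegree => j (x ^ (i:ℕ))) := by
    have := linearIndependent_pow (K := ℚ) x
    exact this.map' j.toLinearMap (LinearMap.ker_eq_bot.2 j.toRingHom.injective)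
  have h2 := aux_indep2 hp ι hc _ hli
  have hM : IsIntegral ℝ (ι (j x)) := Algebra.IsIntegral.isIntegral _
  have hmon := (minpoly.monic hx).map (algebraMap ℚ ℝ)
  have hroot : Polynomial.aeval (ι (j x)) ((minpoly ℚ x).map (algebraMap ℚ ℝ)) = 0 := by
    rw [Polynomial.aeval_map_algebraMap]
    have := congrArg (ι.comp j) (minpoly.aeval ℚ x)
    rw [← Polynomial.aeval_algHom_apply, map_zero] at this
    simpa using this
  symm
  apply minpoly.unique _ _ hmon hroot
  intro q hq hq0
  by_contra hlt
  rw [not_le, Polynomial.degree_map] at hlt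
  have hqn : q.natDegree < (minpoly ℚ x).natDegree := Polynomial.natDegree_lt_natDegree hq.ne_zero hlt
  rw [Polynomial.aeval_eq_sum_range' hqn] at hq0
  rw [Fintype.linearIndependent_iff] at h2
  have := h2 (fun i => q.coeff i) (by
    rw [Finset.sum_range] at hq0
    simpa using hq0) ⟨q.natDegree, hqn⟩
  simp [hq.leadingCoeff] at this

lemma aux_root_bound {p : ℕ} (N : Matrix (Fin p) (Fin p) ℝ) (D : ℝ)
    (hN : ∀ i j, |N i j| ≤ D) (μ : ℂ) (hμ : Polynomial.aeval μ N.charpoly = 0) :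
    ‖μ‖ ≤ p * D := by
  set N' : Matrix (Fin p) (Fin p) ℂ := N.map (algebraMap ℝ ℂ) with hN'
  have h1 : N'.charpoly.IsRoot μ := by
    rw [hN', Matrix.charpoly_map, Polynomial.IsRoot, Polynomial.eval_map_algebraMap]
    exact hμ
  have h2 : Module.End.HasEigenvalue (Matrix.toLin' N') μ := by
    rw [Module.End.hasEigenvalue_iff_isRoot_charpoly]
    simpa using h1
  obtain ⟨k, hk⟩ := eigenvalue_mem_ball h2
  rw [Metric.mem_closedBall, dist_eq_norm] at hk
  have hb : ∀ i j, ‖N' i j‖ ≤ D := by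
    intro i j
    simpa [hN'] using hN i j
  have h3 : ‖μ‖ ≤ ‖μ - N' k k‖ + ‖N' k k‖ := by
    simpa using norm_add_le (μ - N' k k) (N' k k)
  have h4 : ∑ j ∈ Finset.univ.erase k, ‖N' k j‖ + ‖N' k k‖ = ∑ j, ‖N' k j‖ :=
    Finset.sum_erase_add _ _ (Finset.mem_univ k)
  have h5 : ∑ j, ‖N' k j‖ ≤ ∑ j : Fin p, D := Finset.sum_le_sum fun j _ => hb k j
  simp at h5
  linarith

lemma aux_root_lower {p : ℕ} (N : Matrix (Fin p) (Fin p) ℝ) (B : ℝ) (hB : 1 ≤ B)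
    (hN : ∀ μ : ℂ, Polynomial.aeval μ N.charpoly = 0 → ‖μ‖ ≤ B) (hdet : |N.det| = 1)
    (μ : ℂ) (hμ : Polynomial.aeval μ N.charpoly = 0) :
    1 ≤ ‖μ‖ * B ^ p := by
  classical
  set N' : Matrix (Fin p) (Fin p) ℂ := N.map (algebraMap ℝ ℂ) with hN'
  have key : ∀ μ : ℂ, μ ∈ N'.charpoly.roots ↔ Polynomial.aeval μ N.charpoly = 0 := by
    intro μ
    rw [Polynomial.mem_roots (Matrix.charpoly_monic _).ne_zero, hN', Matrix.charpoly_map,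
      Polynomial.IsRoot, Polynomial.eval_map_algebraMap]
  have hd : N'.det = algebraMap ℝ ℂ N.det := by
    rw [hN']; exact (RingHom.map_det (algebraMap ℝ ℂ) N).symm
  have h1 : ‖N'.charpoly.roots.prod‖ = 1 := by
    rw [← Matrix.det_eq_prod_roots_charpoly, hd]
    simpa using hdet
  rw [← Multiset.cons_erase ((key μ).2 hμ), Multiset.prod_cons, norm_mul] at h1
  have h2 : ∀ s : Multiset ℂ, (∀ x ∈ s, ‖x‖ ≤ B) → ‖s.prod‖ ≤ B ^ s.card := by
    intro s
    induction s using Multiset.induction with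
    | empty => simp
    | cons a s ih =>
      intro h
      rw [Multiset.prod_cons, norm_mul, Multiset.card_cons, pow_succ']
      have := h a (by simp)
      have := ih fun x hx => h x (by simp [hx])
      gcongr
  have h3 := h2 (N'.charpoly.roots.erase μ)
    (fun x hx => hN x ((key x).1 (Multiset.mem_of_mem_erase hx)))
  have h4 : (N'.charpoly.roots.erase μ).card ≤ p := by
    refine (Multiset.card_le_card (Multiset.erase_le _ _)).trans ?_
    refine (Polynomial.card_roots' _).trans ?_
    rw [Matrix.charpoly_natDegree_eq_dim]; simp
  have h5 := h3.trans (pow_le_pow_right₀ hB h4)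
  calc 1 = _ := h1.symm
    _ ≤ _ := by gcongr

lemma aux_det_int {p : ℕ} (hp : p.Prime) {A : Type} [DivisionRing A] [CharZero A]
    (ι : A →ₐ[ℚ] Matrix (Fin p) (Fin p) ℝ)
    (hc : Subalgebra.center ℚ A = ⊥) {F : Type} [Field F] [NumberField F] (j : F →ₐ[ℚ] A)
    (hF : Module.finrank ℚ F = p) (x : F) (hxi : IsIntegral ℤ x) :
    ∃ m : ℤ, (ι (j x)).det = m := by
  have hx : IsIntegral ℚ x := Algebra.IsIntegral.isIntegral x
  have hmp := aux_minpoly hp.pos ι hc j x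
  have hd : (minpoly ℚ x).natDegree ∣ p := hF ▸ minpoly.degree_dvd hx
  rcases (Nat.dvd_prime hp).1 hd with h | h
  · obtain ⟨q, rfl⟩ := (minpoly.natDegree_eq_one_iff).1 h
    have hq : IsIntegral ℤ q := (isIntegral_algebraMap_iff (algebraMap ℚ F).injective).1 hxi
    obtain ⟨m, rfl⟩ := IsIntegrallyClosed.isIntegral_iff.1 hq
    refine ⟨m ^ p, ?_⟩
    rw [AlgHom.commutes, AlgHom.commutes]
    simp [← Matrix.diagonal_intCast]
  · have hch : (ι (j x)).charpoly = (minpoly ℚ x).map (algebraMap ℚ ℝ) := by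
      rw [← hmp]
      apply Polynomial.eq_of_monic_of_dvd_of_natDegree_le
      · exact minpoly.monic (Algebra.IsIntegral.isIntegral _)
      · exact Matrix.charpoly_monic _
      · exact Matrix.minpoly_dvd_charpoly _
      · rw [Matrix.charpoly_natDegree_eq_dim, hmp, Polynomial.natDegree_map, h]; simp
    rw [Matrix.det_eq_sign_charpoly_coeff, hch,
      minpoly.isIntegrallyClosed_eq_field_fractions' ℚ hxi]
    refine ⟨(-1) ^ p * (minpoly ℤ x).coeff 0, ?_⟩
    simp

lemma aux_det_one {p : ℕ} (hp : p.Prime) {A : Type} [DivisionRing A] [CharZero A]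
    (ι : A →ₐ[ℚ] Matrix (Fin p) (Fin p) ℝ)
    (hc : Subalgebra.center ℚ A = ⊥) {F : Type} [Field F] [NumberField F] (j : F →ₐ[ℚ] A)
    (hF : Module.finrank ℚ F = p) (x : F) (hx0 : x ≠ 0) (hxi : IsIntegral ℤ x)
    (hxi' : IsIntegral ℤ x⁻¹) :
    |(ι (j x)).det| = 1 := by
  obtain ⟨m, hm⟩ := aux_det_int hp ι hc j hF x hxi
  obtain ⟨n, hn⟩ := aux_det_int hp ι hc j hF x⁻¹ hxi'
  have h : (ι (j x)).det * (ι (j x⁻¹)).det = 1 := by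
    rw [← Matrix.det_mul, ← map_mul, ← map_mul, mul_inv_cancel₀ hx0, map_one, map_one,
      Matrix.det_one]
  rw [hm, hn] at h
  have h' : m * n = 1 := by exact_mod_cast h
  rw [hm]
  have := Int.isUnit_iff.1 (IsUnit.of_mul_eq_one _ h')
  rcases this with rfl | rfl <;> simp

lemma aux_so_entry {p : ℕ} (k : Matrix (Fin p) (Fin p) ℝ) (hk : kᵀ * k = 1) (i j : Fin p) :
    |k i j| ≤ 1 := by
  have := entry_norm_bound_of_unitary (𝕜 := ℝ) (U := k) (by
    rw [Matrix.mem_unitaryGroup_iff']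
    simpa [Matrix.star_eq_conjTranspose] using hk) i j
  simpa using this

lemma aux_embed {p : ℕ} (hp : p.Prime) {A : Type} [DivisionRing A] [CharZero A]
    (ι : A →ₐ[ℚ] Matrix (Fin p) (Fin p) ℝ)
    (hc : Subalgebra.center ℚ A = ⊥) {F : Type} [Field F] [NumberField F] (j : F →ₐ[ℚ] A)
    (hF : Module.finrank ℚ F = p) (x : F) (hx0 : x ≠ 0) (hxi : IsIntegral ℤ x)
    (hxi' : IsIntegral ℤ x⁻¹) (z : Matrix.GeneralLinearGroup (Fin p) ℝ) (δ : ℝ) (hδ : 0 < δ)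
    (k : Matrix (Fin p) (Fin p) ℝ) (hk : IsSO k)
    (h : ∀ i l, |((negOddRoot p ((ι (j x)).det)) •
                ((↑z⁻¹ : Matrix (Fin p) (Fin p) ℝ) * ι (j x) *
                  (↑z : Matrix (Fin p) (Fin p) ℝ)) - k) i l| < δ) (σ : F →+* ℂ) :
    ‖σ x‖ ≤ p * (1 + δ) ∧ 1 ≤ ‖σ x‖ * (p * (1 + δ)) ^ p := by
  have hdet := aux_det_one hp ι hc j hF x hx0 hxi hxi'
  set M := ι (j x) with hM
  set N : Matrix (Fin p) (Fin p) ℝ := (↑z⁻¹ : Matrix (Fin p) (Fin p) ℝ) * M * (↑z : Matrix (Fin p) (Fin p) ℝ) with hN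
  have hs : |negOddRoot p M.det| = 1 := by
    unfold negOddRoot
    rw [hdet, Real.one_rpow, mul_one]
    rcases Real.sign_apply_eq_of_ne_zero M.det (by intro h0; simp [h0] at hdet) with h | h <;>
      rw [h] <;> simp
  have hch : N.charpoly = M.charpoly := by
    rw [hN, Matrix.coe_units_inv]
    exact Matrix.charpoly_units_conj' z M
  have hNd : ∀ i l, |N i l| ≤ 1 + δ := by
    intro i l
    have h1 := h i l
    have h2 := aux_so_entry k hk.1 i l
    rw [Matrix.sub_apply, Matrix.smul_apply, smul_eq_mul] at h1
    have h3 : |N i l| = |negOddRoot p M.det * N i l| := by rw [abs_mul, hs, one_mul]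
    rw [h3]
    have := abs_add_le (negOddRoot p M.det * N i l - k i l) (k i l)
    rw [sub_add_cancel] at this
    linarith
  have hroot : Polynomial.aeval (σ x) M.charpoly = 0 := by
    have h1 : Polynomial.aeval (σ x) (minpoly ℝ M) = 0 := by
      rw [hM, aux_minpoly hp.pos ι hc j x, Polynomial.aeval_map_algebraMap]
      have : σ x = σ.toRatAlgHom x := rfl
      rw [this, Polynomial.aeval_algHom_apply, minpoly.aeval, map_zero]
    obtain ⟨g, hg⟩ := Matrix.minpoly_dvd_charpoly M
    rw [hg, map_mul, h1, zero_mul]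
  have hb : ∀ μ : ℂ, Polynomial.aeval μ M.charpoly = 0 → ‖μ‖ ≤ p * (1 + δ) := by
    intro μ hμ
    exact aux_root_bound N _ hNd μ (by rw [hch]; exact hμ)
  refine ⟨hb _ hroot, aux_root_lower M _ ?_ hb hdet _ hroot⟩
  have : (1:ℝ) ≤ p := by exact_mod_cast hp.one_lt.le
  nlinarith

lemma aux_T (p : ℕ) : ∃ N : ℕ, ∀ (F : Type) [Field F] [NumberField F], Module.finrank ℚ F = p →
    ∀ s : Finset F, (∀ x ∈ s, IsIntegral ℤ x ∧ ∀ φ : F →+* ℂ, ‖φ x‖ ≤ 2) → s.card ≤ N := by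
  classical
  let C : ℕ := Nat.ceil (max (2:ℝ) 1 ^ p * p.choose (p / 2))
  let P : Finset (Polynomial ℤ) :=
    (Fintype.piFinset (fun _ : Fin (p+1) => Finset.Icc (-C : ℤ) C)).image
      (fun c => ∑ i : Fin (p+1), Polynomial.monomial (i:ℕ) (c i))
  refine ⟨p * P.card, ?_⟩
  intro F _ _ hF s hs
  have hdeg : ∀ x ∈ s, (minpoly ℤ x).natDegree ≤ p := by
    intro x hx
    have hi := (hs x hx).1
    have h_map := minpoly.isIntegrallyClosed_eq_field_fractions' ℚ hi
    have h1 : (minpoly ℚ x).natDegree = (minpoly ℤ x).natDegree := by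
      rw [h_map, (minpoly.monic hi).natDegree_map]
    rw [← h1, ← hF]
    exact minpoly.natDegree_le x
  refine Finset.card_le_mul_card_image_of_maps_to (f := fun x => minpoly ℤ x) ?_ p ?_
  · intro x hx
    have hi := (hs x hx).1
    have h_map := minpoly.isIntegrallyClosed_eq_field_fractions' ℚ hi
    rw [Finset.mem_image]
    refine ⟨fun i => (minpoly ℤ x).coeff i, ?_, ?_⟩
    · rw [Fintype.mem_piFinset]
      intro i
      rw [Finset.mem_Icc, ← abs_le, ← @Int.cast_le ℝ]
      refine (Eq.trans_le ?_ <| NumberField.Embeddings.coeff_bdd_of_norm_le (hs x hx).2 i).trans ?_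
      · rw [h_map, Polynomial.coeff_map, eq_intCast, Int.norm_cast_rat, Int.norm_eq_abs, Int.cast_abs]
      · rw [hF]
        push_cast
        exact Nat.le_ceil _
    · rw [Fin.sum_univ_eq_sum_range (fun i => Polynomial.monomial i ((minpoly ℤ x).coeff i)) (p+1)]
      exact ((minpoly ℤ x).as_sum_range' (p+1) (Nat.lt_succ_of_le (hdeg x hx))).symm
  · intro b _
    rcases Finset.eq_empty_or_nonempty {a ∈ s | minpoly ℤ a = b} with h | ⟨y, hy⟩
    · rw [h]; simp
    · rw [Finset.mem_filter] at hy
      have hb0 : b ≠ 0 := hy.2 ▸ minpoly.ne_zero (hs y hy.1).1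
      have hb0' : b.map (algebraMap ℤ F) ≠ 0 :=
        (Polynomial.map_ne_zero_iff (algebraMap ℤ F).injective_int).2 hb0
      calc _ ≤ (b.map (algebraMap ℤ F)).roots.toFinset.card := by
            apply Finset.card_le_card
            intro a ha
            rw [Finset.mem_filter] at ha
            rw [Multiset.mem_toFinset, Polynomial.mem_roots hb0', Polynomial.IsRoot,
              Polynomial.eval_map_algebraMap, ← ha.2, minpoly.aeval]
        _ ≤ _ := Multiset.toFinset_card_le _
        _ ≤ _ := Polynomial.card_roots' _
        _ ≤ b.natDegree := Polynomial.natDegree_map_le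
        _ ≤ p := hy.2 ▸ hdeg y hy.1

lemma aux_cells (p : ℕ) : ∃ N : ℕ, ∀ (F : Type) [Field F] [NumberField F], Module.finrank ℚ F = p →
    ∀ (B : ℝ), 1 ≤ B → 
    ∀ s : Finset F, (∀ x ∈ s, x ≠ 0 ∧ IsIntegral ℤ x ∧ IsIntegral ℤ x⁻¹ ∧
      ∀ φ : F →+* ℂ, ‖φ x‖ ≤ B ∧ 1 ≤ ‖φ x‖ * B ^ p) →
      (s.card : ℝ) ≤ N * ((p + 1) * Real.logb 2 B + 2) ^ p := by
  classical
  obtain ⟨N, hN⟩ := aux_T p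
  refine ⟨N, ?_⟩
  intro F _ _ hF B hB s hs
  set L := Real.logb 2 B with hL
  have hL0 : 0 ≤ L := Real.logb_nonneg (by norm_num) hB
  let f : F → (F →+* ℂ) → ℤ := fun x φ => ⌊Real.logb 2 ‖φ x‖⌋
  let K : Finset ((F →+* ℂ) → ℤ) := Fintype.piFinset (fun _ => Finset.Icc ⌊-(p * L)⌋ ⌊L⌋)
  have hpos : ∀ x ∈ s, ∀ φ : F →+* ℂ, 0 < ‖φ x‖ := by
    intro x hx φ
    rw [norm_pos_iff]
    exact (map_ne_zero φ).2 (hs x hx).1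
  have h1 : s.card ≤ N * K.card := by
    refine Finset.card_le_mul_card_image_of_maps_to (f := f) ?_ N ?_
    · intro x hx
      rw [Fintype.mem_piFinset]
      intro φ
      have hp := hpos x hx φ
      obtain ⟨ha, hb⟩ := (hs x hx).2.2.2 φ
      rw [Finset.mem_Icc]
      constructor
      · apply Int.floor_le_floor
        have := Real.logb_le_logb_of_le (b := 2) (by norm_num) one_pos hb
        rw [Real.logb_mul hp.ne' (by positivity), Real.logb_pow, Real.logb_one] at this
        linarith
      · apply Int.floor_le_floor
        exact Real.logb_le_logb_of_le (by norm_num) hp ha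
    · intro b _
      rcases Finset.eq_empty_or_nonempty {a ∈ s | f a = b} with h | ⟨y, hy⟩
      · rw [h]; simp
      · rw [Finset.mem_filter] at hy
        obtain ⟨hy, hyb⟩ := hy
        have hy0 := (hs y hy).1
        have hinj : Function.Injective (fun x : F => x * y⁻¹) :=
          mul_left_injective₀ (inv_ne_zero hy0)
        rw [← Finset.card_image_of_injective _ hinj]
        apply hN F hF
        intro w hw
        rw [Finset.mem_image] at hw
        obtain ⟨x, hx, rfl⟩ := hw
        rw [Finset.mem_filter] at hx
        obtain ⟨hx, hxb⟩ := hx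
        refine ⟨(hs x hx).2.1.mul (hs y hy).2.2.1, ?_⟩
        intro φ
        have e : f x φ = f y φ := by rw [hxb, hyb]
        have h1 := Int.lt_floor_add_one (Real.logb 2 ‖φ x‖)
        have h2 := Int.floor_le (Real.logb 2 ‖φ y‖)
        have e' : (⌊Real.logb 2 ‖φ x‖⌋ : ℝ) = ⌊Real.logb 2 ‖φ y‖⌋ := by exact_mod_cast e
        have h3 : Real.logb 2 (‖φ x‖ / ‖φ y‖) ≤ 1 := by
          rw [Real.logb_div (hpos x hx φ).ne' (hpos y hy φ).ne']
          linarith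
        rw [Real.logb_le_iff_le_rpow (by norm_num) (div_pos (hpos x hx φ) (hpos y hy φ)),
          Real.rpow_one] at h3
        simpa [div_eq_mul_inv] using h3
  have h2 : (K.card : ℝ) ≤ ((p + 1) * L + 2) ^ p := by
    change ((Fintype.piFinset
      (fun _ : F →+* ℂ => Finset.Icc ⌊-(p * L)⌋ ⌊L⌋)).card : ℝ) ≤ _
    rw [Fintype.card_piFinset, Finset.prod_const, Finset.card_univ, NumberField.Embeddings.card, hF, Nat.cast_pow]
    gcongr
    rw [Int.card_Icc]
    have hle : ⌊-(p * L)⌋ ≤ ⌊L⌋ := by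
      apply Int.floor_le_floor
      have : 0 ≤ p * L := by positivity
      linarith
    have : (((⌊L⌋ + 1 - ⌊-(p * L)⌋).toNat : ℤ) : ℝ) = ⌊L⌋ + 1 - ⌊-(p * L)⌋ := by
      rw [Int.toNat_of_nonneg (by omega)]; push_cast; ring
    rw [Int.cast_natCast] at this
    rw [this]
    have := Int.floor_le L
    have := Int.lt_floor_add_one (-(p * L))
    linarith
  calc (s.card : ℝ) ≤ ((N * K.card : ℕ) : ℝ) := by exact_mod_cast h1
    _ = N * K.card := by push_cast; ring
    _ ≤ _ := by gcongr

lemma aux_log (p : ℕ) (hp : 2 ≤ p) : ∃ C : ℝ, 0 < C ∧ ∀ δ : ℝ, 0 < δ →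
    ((p + 1) * Real.logb 2 (p * (1 + δ)) + 2) ^ p ≤ C * (1 + δ) ^ (p - 1) := by
  have hp0 : (0:ℝ) < p := by positivity
  have hp1 : (1:ℝ) < p := by exact_mod_cast hp
  set ε : ℝ := (p - 1) / p with hε
  have hε0 : 0 < ε := div_pos (by linarith) hp0
  have hl2 : 0 < Real.log 2 := Real.log_pos (by norm_num)
  set K : ℝ := (p + 1) * (p ^ ε / ε / Real.log 2) + 2 with hK
  have hK0 : 0 < K := by positivity
  refine ⟨K ^ p, by positivity, ?_⟩
  intro δ hδ
  have hy : (1:ℝ) ≤ 1 + δ := by linarith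
  have h1 : (1:ℝ) ≤ (1 + δ) ^ ε := Real.one_le_rpow hy hε0.le
  have h2 : Real.logb 2 (p * (1 + δ)) ≤ p ^ ε / ε / Real.log 2 * (1 + δ) ^ ε := by
    have := Real.log_le_rpow_div (x := p * (1 + δ)) (by positivity) hε0
    rw [Real.mul_rpow hp0.le (by linarith)] at this
    rw [Real.logb]
    calc _ ≤ (p:ℝ) ^ ε * (1 + δ) ^ ε / ε / Real.log 2 := by gcongr
      _ = _ := by ring
  have h3 : 0 ≤ Real.logb 2 (p * (1 + δ)) := Real.logb_nonneg (by norm_num) (by nlinarith)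
  have h4 : (p + 1) * Real.logb 2 (p * (1 + δ)) + 2 ≤ K * (1 + δ) ^ ε := by
    have : (p + 1) * Real.logb 2 (p * (1 + δ)) ≤ (p + 1) * (p ^ ε / ε / Real.log 2 * (1 + δ) ^ ε) := by
      gcongr
    rw [hK, add_mul]
    linarith
  calc _ ≤ (K * (1 + δ) ^ ε) ^ p := by gcongr
    _ = K ^ p * (1 + δ) ^ (p - 1) := by
      rw [mul_pow, ← Real.rpow_natCast ((1 + δ) ^ ε), ← Real.rpow_mul (by linarith), hε,
        div_mul_cancel₀ _ hp0.ne', ← Real.rpow_natCast (1 + δ) (p - 1), Nat.cast_sub (by omega)]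
      simp

lemma aux_main (p : ℕ) (hp : p.Prime) :
    ∃ C : ℝ, 0 < C ∧
      ∀ (A : Type) [DivisionRing A] [CharZero A]
        (ι : A →ₐ[ℚ] Matrix (Fin p) (Fin p) ℝ),
        Subalgebra.center ℚ A = ⊥ →
        ∀ (F : Type) [Field F] [NumberField F] (j : F →ₐ[ℚ] A), Module.finrank ℚ F = p → 
        ∀ O : Subring A, IsOrder A O →
        ∀ z : Matrix.GeneralLinearGroup (Fin p) ℝ,
        ∀ δ : ℝ, 0 < δ → ∀ S : Set A,
        S ⊆ {ξ : A | ξ ∈ O ∧ (∃ v ∈ O, ξ * v = 1 ∧ v * ξ = 1) ∧ ξ ∈ Set.range j ∧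
            ∃ k : Matrix (Fin p) (Fin p) ℝ, IsSO k ∧
              ∀ i j, |((negOddRoot p ((ι ξ).det)) •
                ((↑z⁻¹ : Matrix (Fin p) (Fin p) ℝ) * ι ξ *
                  (↑z : Matrix (Fin p) (Fin p) ℝ)) - k) i j| < δ} → S.Finite ∧
        (S.ncard : ℝ) ≤ C * (1 + δ) ^ (p - 1) := by
  classical
  obtain ⟨N, hN⟩ := aux_cells p
  obtain ⟨C, hC, hC'⟩ := aux_log p hp.two_le
  refine ⟨(N + 1) * C, by positivity, ?_⟩
  intro A _ _ ι hc F _ _ j hF O hO z δ hδ S hS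
  have hjinj : Function.Injective j := j.toRingHom.injective
  have hOi : ∀ x : F, j x ∈ O → IsIntegral ℤ x := by
    intro x hx
    have hfg : (AddSubgroup.toIntSubmodule O.toAddSubgroup).FG :=
      (Submodule.fg_iff_addSubgroup_fg _).2 hO.1
    have : IsIntegral ℤ (j x) :=
      IsIntegral.of_mem_of_fg (subalgebraOfSubring O) hfg (j x) hx
    exact (isIntegral_algHom_iff (j.restrictScalars ℤ) hjinj).1 this
  have key : ∀ s : Finset F, (s : Set F) ⊆ j ⁻¹' S → (s.card : ℝ) ≤ (N + 1) * C * (1 + δ) ^ (p - 1) := by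
    intro s hs
    have hp1 : (1:ℝ) ≤ p := by exact_mod_cast hp.one_lt.le
    have h := hN F hF (p * (1 + δ)) (by nlinarith) s (by
      intro x hx
      obtain ⟨h1, ⟨v, hv, hv1, hv2⟩, -, k, hk, hk'⟩ := hS (hs hx)
      have hx0 : x ≠ 0 := by
        rintro rfl
        simp at hv1
      have hxv : j x⁻¹ = v := by
        rw [map_inv₀]
        exact inv_eq_of_mul_eq_one_right hv1
      have hi := hOi x h1
      have hi' := hOi x⁻¹ (hxv ▸ hv)
      exact ⟨hx0, hi, hi', fun φ => aux_embed hp ι hc j hF x hx0 hi hi' z δ hδ k hk hk' φ⟩)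
    refine h.trans ?_
    have h2 := hC' δ hδ
    have h3 : (0:ℝ) ≤ C * (1 + δ) ^ (p - 1) := by positivity
    calc _ ≤ N * (C * (1 + δ) ^ (p - 1)) := by gcongr
      _ ≤ _ := by nlinarith
  have hfin : (j ⁻¹' S).Finite := by
    by_contra hinf
    obtain ⟨t, ht, htc⟩ := Set.Infinite.exists_subset_card_eq hinf
      (⌈(N + 1) * C * (1 + δ) ^ (p - 1)⌉₊ + 1)
    have := key t ht
    rw [htc] at this
    have h2 := Nat.le_ceil ((N + 1) * C * (1 + δ) ^ (p - 1))
    push_cast at this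
    linarith
  have himg : S = j '' (j ⁻¹' S) := by
    rw [Set.image_preimage_eq_iff.2]
    intro x hx
    exact (hS hx).2.2.1
  refine ⟨himg ▸ hfin.image j, ?_⟩
  rw [himg, Set.ncard_image_of_injective _ hjinj, Set.ncard_eq_toFinset_card _ hfin]
  exact key _ (by simp)

/-- For a prime `p ≥ 3` there is `C > 0` depending only on `p` such that:
for every degree-`p` commutative subalgebra (subfield) `E ⊆ A`, the number of units
`ξ ∈ 𝒪ˣ ∩ E` with `nr(ξ)^(-1/p) · z⁻¹ (ι ξ) z` within `δ` (entrywise) of some `k ∈ SO(p)`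
is at most `C·(1+δ)^(p-1)`. -/
theorem stmt10 (p : ℕ) (hp : p.Prime) (hp3 : 3 ≤ p) :
    ∃ C : ℝ, 0 < C ∧
      ∀ (A : Type) [DivisionRing A] [CharZero A]
        (ι : A →ₐ[ℚ] Matrix (Fin p) (Fin p) ℝ),
        Function.Injective ι →
        Subalgebra.center ℚ A = ⊥ →
        Module.finrank ℚ A = p ^ 2 →
        ∀ O : Subring A, IsOrder A O →
        ∀ E : Subalgebra ℚ A, (∀ x ∈ E, ∀ y ∈ E, x * y = y * x) →
          Module.finrank ℚ E = p →
        ∀ z : Matrix.GeneralLinearGroup (Fin p) ℝ,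
        ∀ δ : ℝ, 0 < δ →
        {ξ : A | ξ ∈ O ∧ (∃ v ∈ O, ξ * v = 1 ∧ v * ξ = 1) ∧ ξ ∈ E ∧
            ∃ k : Matrix (Fin p) (Fin p) ℝ, IsSO k ∧
              ∀ i j, |((negOddRoot p ((ι ξ).det)) •
                ((↑z⁻¹ : Matrix (Fin p) (Fin p) ℝ) * ι ξ *
                  (↑z : Matrix (Fin p) (Fin p) ℝ)) - k) i j| < δ}.Finite ∧
        ({ξ : A | ξ ∈ O ∧ (∃ v ∈ O, ξ * v = 1 ∧ v * ξ = 1) ∧ ξ ∈ E ∧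
            ∃ k : Matrix (Fin p) (Fin p) ℝ, IsSO k ∧
              ∀ i j, |((negOddRoot p ((ι ξ).det)) •
                ((↑z⁻¹ : Matrix (Fin p) (Fin p) ℝ) * ι ξ *
                  (↑z : Matrix (Fin p) (Fin p) ℝ)) - k) i j| < δ}.ncard : ℝ) ≤
          C * (1 + δ) ^ (p - 1) := by
  obtain ⟨C, hC, h⟩ := aux_main p hp
  refine ⟨C, hC, ?_⟩
  intro A _ _ ι _ hc hA O hO E hE hEp z δ hδ
  let : CommRing E := { (inferInstance : Ring E) with
    mul_comm := fun x y => Subtype.ext (hE x x.2 y y.2) }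
  have : IsDomain E := 
    Function.Injective.isDomain E.val.toRingHom Subtype.val_injective
  have : FiniteDimensional ℚ E := Module.finite_of_finrank_pos (by rw [hEp]; exact hp.pos)
  let : Field E := fieldOfFiniteDimensional ℚ E
  have : CharZero E := algebraRat.charZero E
  have hfr : ∀ (a b : Algebra ℚ E), a = b := fun a b => Subsingleton.elim a b
  have hfr' := hfr E.algebra DivisionRing.toRatAlgebra
  have hfd : @FiniteDimensional ℚ E _ _ (@Algebra.toModule _ _ _ _ DivisionRing.toRatAlgebra) := by
    rw [← hfr']; infer_instance
  have : NumberField E := @NumberField.mk E _ inferInstance hfd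
  let jr : E →+* A :=
    { toFun := Subtype.val, map_one' := rfl, map_mul' := fun _ _ => rfl,
      map_zero' := rfl, map_add' := fun _ _ => rfl }
  refine h A ι hc E jr.toRatAlgHom ?_ O hO z δ hδ _ ?_
  · rw [← hfr']; exact hEp
  · rintro ξ ⟨h1, h2, h3, h4⟩
    exact ⟨h1, h2, ⟨⟨ξ, h3⟩, rfl⟩, h4⟩
end

section
/- Let K be a number field of degree n over ℚ and let m be a positive integer. Then the number of nonzero ideals I of the ring of integers 𝒪_K with absolute norm N(I) = m is at most τ(m)^{n-1}. -/
open UniqueFactorizationMonoid in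
theorem stmt12_enum (K : Type*) [Field K] [NumberField K] (p : ℕ) (hp : p.Prime) :
    ∃ e : ℕ → Ideal (NumberField.RingOfIntegers K),
      (∀ Q : Ideal (NumberField.RingOfIntegers K), Q.IsPrime →
        (p : NumberField.RingOfIntegers K) ∈ Q → ∃ j < Module.finrank ℚ K, e j = Q) ∧
      (∀ j, e j = ⊤ ∨ ((e j).IsPrime ∧ (p : NumberField.RingOfIntegers K) ∈ e j)) := by
  classical
  have hpZ : Prime (p : ℤ) := Nat.prime_iff_prime_int.mp hp
  have hmax : (Ideal.span {(p : ℤ)}).IsMaximal := hpZ.isMaximal_span_singleton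
  have hp0 : Ideal.span {(p : ℤ)} ≠ ⊥ := by simpa using hp.ne_zero
  set S := IsDedekindDomain.primesOverFinset (Ideal.span {(p : ℤ)})
    (NumberField.RingOfIntegers K) with hS
  have hcard : S.card ≤ Module.finrank ℚ K :=
    Ideal.card_primesOverFinset_le_finrank (R := ℤ) (NumberField.RingOfIntegers K) ℚ K hp0
  have hmem : ∀ Q, Q ∈ S ↔ Q.IsPrime ∧ (p : NumberField.RingOfIntegers K) ∈ Q := by
    intro Q
    rw [hS, IsDedekindDomain.mem_primesOverFinset_iff hp0]
    constructor
    · rintro ⟨h1, h2⟩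
      exact ⟨h1, by simpa using (Ideal.liesOver_span_iff h1.ne_top hpZ).1 h2⟩
    · rintro ⟨h1, h2⟩
      exact ⟨h1, (Ideal.liesOver_span_iff h1.ne_top hpZ).2 (by simpa using h2)⟩
  refine ⟨fun j => S.toList.getD j ⊤, ?_, ?_⟩
  · intro Q hQ hpQ
    have : Q ∈ S.toList := by simpa using (hmem Q).2 ⟨hQ, hpQ⟩
    obtain ⟨j, hj, rfl⟩ := List.getElem_of_mem this
    refine ⟨j, ?_, ?_⟩
    · rw [Finset.length_toList] at hj; omega
    · exact List.getD_eq_getElem _ _ hj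
  · intro j
    by_cases hj : j < S.toList.length
    · right
      have h : S.toList[j] ∈ S := by
        rw [← Finset.mem_toList]; exact List.getElem_mem hj
      have := (hmem _).1 h
      simp only [List.getD_eq_getElem _ _ hj]
      exact this
    · left
      simp only [List.getD_eq_getElem?_getD]
      rw [List.getElem?_eq_none (by omega)]; rfl

theorem stmt12_dvd (K : Type*) [Field K] [NumberField K] (p : ℕ) (hp : p.Prime)
    (Q : Ideal (NumberField.RingOfIntegers K)) (hQ : Q.IsPrime)
    (hpQ : (p : NumberField.RingOfIntegers K) ∈ Q) : p ∣ Ideal.absNorm Q := by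
  have h1 := Ideal.absNorm_dvd_absNorm_of_le
    ((Ideal.span_singleton_le_iff_mem (I := Q)).2 hpQ)
  rw [Ideal.absNorm_span_natCast, Nat.dvd_prime_pow hp] at h1
  obtain ⟨k, -, hk⟩ := h1
  rw [hk]
  refine dvd_pow_self p ?_
  rintro rfl
  exact hQ.ne_top (Ideal.absNorm_eq_one_iff.1 (by simpa using hk))

theorem stmt12_mem (K : Type*) [Field K] [NumberField K] (p : ℕ) (hp : p.Prime)
    (Q : Ideal (NumberField.RingOfIntegers K)) (hQ : Q.IsPrime) (h0 : Q ≠ ⊥)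
    (h : p ∣ Ideal.absNorm Q) : (p : NumberField.RingOfIntegers K) ∈ Q := by
  have := hQ.isMaximal h0
  obtain ⟨q, k, -, hq, hqp, hk⟩ := Ideal.exists_prime_and_absNorm_eq_pow Q
  rw [hk] at h
  rwa [(Nat.prime_dvd_prime_iff_eq hp hqp).1 (hp.dvd_of_dvd_pow h)]

open UniqueFactorizationMonoid in
open scoped Classical in
theorem stmt12_norm (K : Type*) [Field K] [NumberField K] (p : ℕ)
    (I : Ideal (NumberField.RingOfIntegers K)) (hI : I ≠ ⊥)
    (F : Finset (Ideal (NumberField.RingOfIntegers K)))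
    (hF : ∀ Q ∈ F, Q ≠ ⊥)
    (hIF : (normalizedFactors I).toFinset ⊆ F) :
    (Ideal.absNorm I).factorization p =
      ∑ Q ∈ F, (normalizedFactors I).count Q * (Ideal.absNorm Q).factorization p := by
  have h : I = ∏ Q ∈ F, Q ^ (normalizedFactors I).count Q := by
    rw [← Finset.prod_multiset_count_of_subset _ F hIF]
    exact (Ideal.prod_normalizedFactors_eq_self hI).symm
  conv_lhs => rw [h]
  rw [map_prod, Nat.factorization_prod]
  · simp [Finsupp.finsetSum_apply]
  · intro Q hQ
    rw [map_pow]
    exact pow_ne_zero _ (by rw [Ne, Ideal.absNorm_eq_zero_iff]; exact hF Q hQ)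

/-- In a number field `K` of degree `n` over `ℚ`, the number of nonzero
ideals of the ring of integers of absolute norm `m` is at most `τ(m)^(n-1)`. -/
theorem stmt12 (K : Type*) [Field K] [NumberField K] (n : ℕ)
    (hn : Module.finrank ℚ K = n) (m : ℕ) (hm : 0 < m) :
    {I : Ideal (NumberField.RingOfIntegers K) | I ≠ ⊥ ∧ Ideal.absNorm I = m}.Finite ∧
      {I : Ideal (NumberField.RingOfIntegers K) | I ≠ ⊥ ∧ Ideal.absNorm I = m}.ncard ≤
        m.divisors.card ^ (n - 1) := by
  classical
  refine ⟨(Ideal.finite_setOfPred_absNorm_eq m).subset fun I hI => hI.2, ?_⟩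
  have hE : ∀ p : ℕ, ∃ e : ℕ → Ideal (NumberField.RingOfIntegers K), p.Prime →
      (∀ Q : Ideal (NumberField.RingOfIntegers K), Q.IsPrime →
        (p : NumberField.RingOfIntegers K) ∈ Q → ∃ j < n, e j = Q) ∧
      (∀ j, e j = ⊤ ∨ ((e j).IsPrime ∧ (p : NumberField.RingOfIntegers K) ∈ e j)) := by
    intro p
    by_cases hp : p.Prime
    · obtain ⟨e, he⟩ := stmt12_enum K p hp
      exact ⟨e, fun _ => hn ▸ he⟩
    · exact ⟨fun _ => ⊤, fun h => absurd h hp⟩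
  choose e he using hE
  let c : Ideal (NumberField.RingOfIntegers K) → Ideal (NumberField.RingOfIntegers K) → ℕ :=
    fun I Q => (UniqueFactorizationMonoid.normalizedFactors I).count Q
  have hprime : ∀ I Q : Ideal (NumberField.RingOfIntegers K), Q ∈ UniqueFactorizationMonoid.normalizedFactors I →
      Q.IsPrime ∧ Q ≠ ⊥ := by
    intro I Q hQ
    have := UniqueFactorizationMonoid.prime_of_normalized_factor Q hQ
    exact ⟨Ideal.isPrime_of_prime this, this.ne_zero⟩
  -- bound on exponents
  have hle : ∀ I : Ideal (NumberField.RingOfIntegers K), I ≠ ⊥ → Ideal.absNorm I = m →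
      ∀ p, p.Prime → ∀ j, c I (e p j) ≤ m.factorization p := by
    intro I hI hIm p hp j
    by_cases hc : e p j ∈ UniqueFactorizationMonoid.normalizedFactors I
    · obtain ⟨h1, h2⟩ := hprime I _ hc
      have h3 : (p : NumberField.RingOfIntegers K) ∈ e p j := by
        rcases (he p hp).2 j with h | h
        · exact absurd h h1.ne_top
        · exact h.2
      have h4 := stmt12_dvd K p hp _ h1 h3
      have h5 := stmt12_norm K p I hI
        (UniqueFactorizationMonoid.normalizedFactors I).toFinset
        (fun Q hQ => (hprime I Q (Multiset.mem_toFinset.1 hQ)).2) subset_rfl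
      rw [hIm] at h5
      rw [h5]
      have h6 : 1 ≤ (Ideal.absNorm (e p j)).factorization p :=
        hp.factorization_pos_of_dvd (by rwa [Ne, Ideal.absNorm_eq_zero_iff]) h4
      refine le_trans ?_ (Finset.single_le_sum (f := fun Q =>
        (UniqueFactorizationMonoid.normalizedFactors I).count Q *
          (Ideal.absNorm Q).factorization p) (fun _ _ => Nat.zero_le _)
        (Multiset.mem_toFinset.2 hc))
      exact Nat.le_mul_of_pos_right _ h6
    · simp [c, Multiset.count_eq_zero_of_notMem hc]
  let d : Ideal (NumberField.RingOfIntegers K) → Fin (n - 1) → ℕ := fun I j =>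
    ∏ p ∈ m.primeFactors, p ^ c I (e p (j + 1))
  have hcard : ((Fintype.piFinset fun _ : Fin (n - 1) => m.divisors) :
      Set (Fin (n - 1) → ℕ)).ncard = m.divisors.card ^ (n - 1) := by
    rw [Set.ncard_coe_finset]; simp
  rw [← hcard]
  refine Set.ncard_le_ncard_of_injOn d ?_ ?_ (Finset.finite_toSet _)
  · rintro I ⟨hI, hIm⟩
    simp only [Finset.mem_coe, Fintype.mem_piFinset, Nat.mem_divisors]
    intro j
    refine ⟨?_, hm.ne'⟩
    conv_rhs => rw [← Nat.prod_factorization_pow_eq_self hm.ne']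
    refine Finset.prod_dvd_prod_of_dvd _ _ fun p hp => ?_
    exact pow_dvd_pow _ (hle I hI hIm p (Nat.prime_of_mem_primeFactors hp) _)
  · rintro I ⟨hI, hIm⟩ J ⟨hJ, hJm⟩ hIJ
    have hd : ∀ I : Ideal (NumberField.RingOfIntegers K), ∀ j : Fin (n - 1),
        ∀ p ∈ m.primeFactors, (d I j).factorization p = c I (e p (j + 1)) := by
      intro I j p hp
      simp only [d]
      rw [Nat.factorization_prod_apply]
      · rw [Finset.sum_eq_single p]
        · rw [Nat.factorization_pow]
          simp [(Nat.prime_of_mem_primeFactors hp).factorization_self]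
        · intro q hq hqp
          rw [Nat.factorization_pow]
          simp [(Nat.prime_of_mem_primeFactors hq).factorization, hqp]
        · exact fun h => absurd hp h
      · intro q hq
        exact pow_ne_zero _ (Nat.prime_of_mem_primeFactors hq).ne_zero
    -- equality of all counts except at index 0
    have hc : ∀ p, p.Prime → ∀ j, j + 1 < n → c I (e p (j + 1)) = c J (e p (j + 1)) := by
      intro p hp j hj
      by_cases hpm : p ∈ m.primeFactors
      · rw [← hd I ⟨j, by omega⟩ p hpm, ← hd J ⟨j, by omega⟩ p hpm, hIJ]
      · have h0 : m.factorization p = 0 := by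
          rwa [← Finsupp.notMem_support_iff, Nat.support_factorization]
        have h1 := hle I hI hIm p hp (j + 1)
        have h2 := hle J hJ hJm p hp (j + 1)
        omega
    have hall : ∀ P : Ideal (NumberField.RingOfIntegers K), P.IsPrime → P ≠ ⊥ →
        c I P = c J P := by
      intro P hP hP0
      have := hP.isMaximal hP0
      obtain ⟨p, k, hk0, hpP, hp, hk⟩ := Ideal.exists_prime_and_absNorm_eq_pow P
      obtain ⟨j, hj, hjP⟩ := (he p hp).1 P hP hpP
      rcases j with _ | j
      swap
      · rw [← hjP]; exact hc p hp j hj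
      let F := insert P ((UniqueFactorizationMonoid.normalizedFactors I).toFinset ∪
        (UniqueFactorizationMonoid.normalizedFactors J).toFinset)
      have hF : ∀ Q ∈ F, Q.IsPrime ∧ Q ≠ ⊥ := by
        intro Q hQ
        simp only [F, Finset.mem_insert, Finset.mem_union, Multiset.mem_toFinset] at hQ
        rcases hQ with rfl | hQ | hQ
        · exact ⟨hP, hP0⟩
        · exact hprime _ _ hQ
        · exact hprime _ _ hQ
      have nI := stmt12_norm K p I hI F (fun Q hQ => (hF Q hQ).2)
        (by intro Q hQ; simp only [F, Finset.mem_insert, Finset.mem_union]; tauto)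
      have nJ := stmt12_norm K p J hJ F (fun Q hQ => (hF Q hQ).2)
        (by intro Q hQ; simp only [F, Finset.mem_insert, Finset.mem_union]; tauto)
      have hPF : P ∈ F := Finset.mem_insert_self _ _
      rw [hIm, ← Finset.add_sum_erase _ _ hPF] at nI
      rw [hJm, ← Finset.add_sum_erase _ _ hPF] at nJ
      have hs : ∑ Q ∈ F.erase P, (UniqueFactorizationMonoid.normalizedFactors I).count Q *
            (Ideal.absNorm Q).factorization p =
          ∑ Q ∈ F.erase P, (UniqueFactorizationMonoid.normalizedFactors J).count Q *
            (Ideal.absNorm Q).factorization p := by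
        refine Finset.sum_congr rfl fun Q hQ => ?_
        obtain ⟨hQP, hQF⟩ := Finset.mem_erase.1 hQ
        obtain ⟨hQ1, hQ2⟩ := hF Q hQF
        by_cases hdv : p ∣ Ideal.absNorm Q
        · obtain ⟨i, hi, hiQ⟩ := (he p hp).1 Q hQ1 (stmt12_mem K p hp Q hQ1 hQ2 hdv)
          rcases i with _ | i
          · exact absurd (hiQ.symm.trans hjP) hQP
          · have := hc p hp i hi
            rw [hiQ] at this
            simp only [c] at this
            rw [this]
        · rw [Nat.factorization_eq_zero_of_not_dvd hdv]; simp
      have hpos : 0 < (Ideal.absNorm P).factorization p := by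
        rw [hk, Nat.factorization_pow]
        simpa [hp.factorization_self] using hk0
      rw [hs] at nI
      exact Nat.eq_of_mul_eq_mul_right hpos (by simp only [c]; omega)
    rw [← Ideal.prod_normalizedFactors_eq_self hI, ← Ideal.prod_normalizedFactors_eq_self hJ]
    congr 1
    ext Q
    by_cases hQ : Q.IsPrime ∧ Q ≠ ⊥
    · exact hall Q hQ.1 hQ.2
    · rw [Multiset.count_eq_zero_of_notMem fun h => hQ (hprime _ _ h),
        Multiset.count_eq_zero_of_notMem fun h => hQ (hprime _ _ h)]
end
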